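/- arXiv:1205.6530 — 4 statements merged into one kernel-verified Lean document; each statement's English description precedes it below -/
import Mathlib

section
/- Let J and J' be measurable range functions on 𝕋^r. Then M_J = M_{J'} if and only if J(σ) = J'(σ) for a.e. σ ∈ 𝕋^r. -/
open MeasureTheory
open scoped ENNReal NNReal

noncomputable section

/-- The unit cube `[0,1)^r` in `ℝ^r`. -/
def cube (r : ℕ) : Set (Fin r → ℝ) := Set.univ.pi fun _ => Set.Ico (0 : ℝ) 1

/-- Lebesgue measure on the torus `𝕋^r`, identified with the cube `[0,1)^r`. -/
def torusMeasure (r : ℕ) : Measure (Fin r → ℝ) := volume.restrict (cube r)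

/-!
If `M_J ⊆ M_{J'}` and `u ∈ H`, then the bounded function `ω ↦ P_{J(ω)} u`, cut off to a set of
finite measure, belongs to `M_J`, hence to `M_{J'}`, so `P_{J(ω)} u ∈ J'(ω)` for almost every `ω`.
Letting `u` run through a countable dense subset of `H` makes the exceptional null set independent
of `u`; since `J'(ω)` is closed, it then contains the whole range `J(ω)` of `P_{J(ω)}`.
Strong measurability of `ω ↦ P_{J(ω)} u` comes from weak measurability and separability: the norm
of a vector is determined by its inner products with a countable dense set.
-/

theorem measurable_of_measurable_dist {Ω X : Type*} [MeasurableSpace Ω] [PseudoMetricSpace X]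
    [SecondCountableTopology X] [MeasurableSpace X] [BorelSpace X] {f : Ω → X}
    (hf : ∀ x, Measurable fun ω => dist (f ω) x) : Measurable f := by
  have ball_basis : TopologicalSpace.IsTopologicalBasis
      {s : Set X | ∃ x ε, s = Metric.ball x ε} := by
    refine TopologicalSpace.isTopologicalBasis_of_isOpen_of_nhds ?_ fun x U hx hU => ?_
    · rintro _ ⟨x, ε, rfl⟩
      exact Metric.isOpen_ball
    · obtain ⟨ε, hε, hball⟩ := Metric.isOpen_iff.1 hU x hx
      exact ⟨_, ⟨x, ε, rfl⟩, Metric.mem_ball_self hε, hball⟩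
  rw [BorelSpace.measurable_eq (α := X), ball_basis.borel_eq_generateFrom]
  refine measurable_generateFrom ?_
  rintro _ ⟨x, ε, rfl⟩
  exact measurableSet_lt (hf x) measurable_const

section InnerProductSpace

variable {𝕜 H : Type*} [RCLike 𝕜] [NormedAddCommGroup H] [InnerProductSpace 𝕜 H]

theorem norm_sq_le_iff_of_denseRange {ι : Type*} {d : ι → H} (hd : DenseRange d) {x : H} {c : ℝ} :
    ‖x‖ ^ 2 ≤ c ↔ ∀ i, 2 * RCLike.re (inner 𝕜 x (d i)) - ‖d i‖ ^ 2 ≤ c := by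
  have expand (y : H) : 2 * RCLike.re (inner 𝕜 x y) - ‖y‖ ^ 2 = ‖x‖ ^ 2 - ‖x - y‖ ^ 2 := by
    rw [norm_sub_sq (𝕜 := 𝕜)]
    ring
  simp only [expand]
  refine ⟨fun h i => (sub_le_self _ (sq_nonneg _)).trans h, fun h => ?_⟩
  have forall_le (y : H) : ‖x‖ ^ 2 - ‖x - y‖ ^ 2 ≤ c :=
    hd.induction_on y (isClosed_le (by fun_prop) continuous_const) h
  simpa using forall_le x

theorem measurable_norm_of_measurable_inner {Ω : Type*} [MeasurableSpace Ω]
    [TopologicalSpace.SeparableSpace H] {f : Ω → H}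
    (hf : ∀ v, Measurable fun ω => inner 𝕜 (f ω) v) : Measurable fun ω => ‖f ω‖ := by
  have measurable_sq : Measurable fun ω => ‖f ω‖ ^ 2 := by
    refine measurable_of_Iic fun c => ?_
    simp only [Set.preimage, Set.mem_Iic, Set.ofPred_forall,
      norm_sq_le_iff_of_denseRange (𝕜 := 𝕜) (TopologicalSpace.denseRange_denseSeq H)]
    exact .iInter fun i => measurableSet_le
      (((RCLike.measurable_re.comp (hf _)).const_mul 2).sub_const _) measurable_const
  simpa only [Real.sqrt_sq (norm_nonneg _)] using measurable_sq.sqrt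

theorem stronglyMeasurable_of_measurable_inner {Ω : Type*} [MeasurableSpace Ω]
    [TopologicalSpace.SeparableSpace H] {f : Ω → H}
    (hf : ∀ v, Measurable fun ω => inner 𝕜 (f ω) v) : StronglyMeasurable f := by
  borelize H
  have : SecondCountableTopology H := UniformSpace.secondCountable_of_separable H
  refine (measurable_of_measurable_dist fun w => ?_).stronglyMeasurable
  simp only [dist_eq_norm]
  refine measurable_norm_of_measurable_inner (𝕜 := 𝕜) fun v => ?_
  simpa only [inner_sub_left] using (hf v).sub_const _

theorem le_of_forall_starProjection_mem_of_denseRange {ι : Type*} {d : ι → H} (hd : DenseRange d)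
    {K L : Submodule 𝕜 H} [K.HasOrthogonalProjection] (hL : IsClosed (L : Set H))
    (h : ∀ i, K.starProjection (d i) ∈ L) : K ≤ L := by
  intro x hx
  have hmem : K.starProjection x ∈ L :=
    hd.induction_on (p := fun y => K.starProjection y ∈ L) x
      (hL.preimage K.starProjection.continuous) h
  rwa [Submodule.starProjection_eq_self_iff.2 hx] at hmem

end InnerProductSpace

section RangeFunction

variable {Ω 𝕜 H : Type*} [MeasurableSpace Ω] [RCLike 𝕜] [NormedAddCommGroup H]
  [InnerProductSpace 𝕜 H]

/-- A measurable range function: a field of subspaces whose orthogonal projections form a weakly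
measurable family. The existence of these projections replaces closedness of the fibers, to which
it is equivalent when `H` is complete. -/
structure IsMeasurableRangeFunction (J : Ω → Submodule 𝕜 H) : Prop where
  [hasOrthogonalProjection : ∀ ω, (J ω).HasOrthogonalProjection]
  measurable_inner_starProjection :
    ∀ u v : H, Measurable fun ω => inner 𝕜 ((J ω).starProjection u) v

/-- The space `M_J` of `L^p` functions taking values in the fibers of `J` almost everywhere. -/
def lpSelections (J : Ω → Submodule 𝕜 H) (p : ℝ≥0∞) (μ : Measure Ω) :
    Submodule 𝕜 (Lp H p μ) where
  carrier := {a | ∀ᵐ ω ∂μ, a ω ∈ J ω}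
  zero_mem' := by
    filter_upwards [Lp.coeFn_zero H p μ] with ω hω
    rw [hω]
    exact (J ω).zero_mem
  add_mem' {a b} ha hb := by
    change ∀ᵐ ω ∂μ, (a + b) ω ∈ J ω
    filter_upwards [Lp.coeFn_add a b, ha, hb] with ω hω haω hbω
    rw [hω]
    exact (J ω).add_mem haω hbω
  smul_mem' c a ha := by
    change ∀ᵐ ω ∂μ, (c • a) ω ∈ J ω
    filter_upwards [Lp.coeFn_smul c a, ha] with ω hω haω
    rw [hω]
    exact (J ω).smul_mem c haω

variable {J J' : Ω → Submodule 𝕜 H} {p : ℝ≥0∞} {μ : Measure Ω}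

theorem coe_lpSelections : (lpSelections J p μ : Set (Lp H p μ)) = {a | ∀ᵐ ω ∂μ, a ω ∈ J ω} :=
  rfl

theorem mem_lpSelections {a : Lp H p μ} : a ∈ lpSelections J p μ ↔ ∀ᵐ ω ∂μ, a ω ∈ J ω :=
  Iff.rfl

theorem toLp_mem_lpSelections {f : Ω → H} (hf : MemLp f p μ) :
    hf.toLp f ∈ lpSelections J p μ ↔ ∀ᵐ ω ∂μ, f ω ∈ J ω := by
  refine mem_lpSelections.trans (Filter.eventually_congr ?_)
  filter_upwards [hf.coeFn_toLp] with ω hω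
  rw [hω]

theorem lpSelections_mono (h : ∀ᵐ ω ∂μ, J ω ≤ J' ω) : lpSelections J p μ ≤ lpSelections J' p μ := by
  intro a ha
  filter_upwards [h, mem_lpSelections.1 ha] with ω hle hmem
  exact hle hmem

namespace IsMeasurableRangeFunction

theorem of_projections {P : Ω → H → H} (hP : ∀ ω u, P ω u ∈ J ω ∧ u - P ω u ∈ (J ω)ᗮ)
    (hPmeas : ∀ u v : H, Measurable fun ω => inner 𝕜 (P ω u) v) :
    IsMeasurableRangeFunction J where
  hasOrthogonalProjection ω := ⟨fun u => ⟨P ω u, hP ω u⟩⟩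
  measurable_inner_starProjection u v := by
    have (ω : Ω) : (J ω).HasOrthogonalProjection := ⟨fun u => ⟨P ω u, hP ω u⟩⟩
    have starProjection_eq (ω : Ω) : (J ω).starProjection u = P ω u :=
      Submodule.eq_starProjection_of_mem_orthogonal (hP ω u).1 (hP ω u).2
    simpa only [starProjection_eq] using hPmeas u v

theorem isClosed (hJ : IsMeasurableRangeFunction J) (ω : Ω) : IsClosed (J ω : Set H) := by
  have := hJ.hasOrthogonalProjection ω
  rw [← (J ω).orthogonal_orthogonal]
  exact (J ω)ᗮ.isClosed_orthogonal

variable [TopologicalSpace.SeparableSpace H]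

theorem memLp_indicator_starProjection (hJ : IsMeasurableRangeFunction J) {s : Set Ω}
    (hs : MeasurableSet s) (hμs : μ s ≠ ∞) (u : H) :
    haveI := hJ.hasOrthogonalProjection
    MemLp (s.indicator fun ω => (J ω).starProjection u) p μ := by
  have := hJ.hasOrthogonalProjection
  have hmeas : StronglyMeasurable fun ω => (J ω).starProjection u :=
    stronglyMeasurable_of_measurable_inner (hJ.measurable_inner_starProjection u)
  refine (memLp_indicator_const p hs u (.inr hμs)).of_le
    (hmeas.indicator hs).aestronglyMeasurable (.of_forall fun ω => ?_)
  rw [norm_indicator_eq_indicator_norm, norm_indicator_eq_indicator_norm]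
  exact Set.indicator_le_indicator ((J ω).norm_starProjection_apply_le u)

theorem ae_starProjection_mem_of_lpSelections_le [SigmaFinite μ]
    (hJ : IsMeasurableRangeFunction J) (h : lpSelections J p μ ≤ lpSelections J' p μ) (u : H) :
    haveI := hJ.hasOrthogonalProjection
    ∀ᵐ ω ∂μ, (J ω).starProjection u ∈ J' ω := by
  have := hJ.hasOrthogonalProjection
  refine ae_of_forall_measure_lt_top_ae_restrict _ fun s hs hμs => (ae_restrict_iff' hs).2 ?_
  have hLp : MemLp (s.indicator fun ω => (J ω).starProjection u) p μ :=
    hJ.memLp_indicator_starProjection hs hμs.ne u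
  have mem_J (ω : Ω) : s.indicator (fun ω => (J ω).starProjection u) ω ∈ J ω := by
    classical
    rw [Set.indicator_apply]
    split_ifs
    exacts [(J ω).starProjection_apply_mem u, (J ω).zero_mem]
  have mem_J' : ∀ᵐ ω ∂μ, s.indicator (fun ω => (J ω).starProjection u) ω ∈ J' ω :=
    (toLp_mem_lpSelections hLp).1 (h ((toLp_mem_lpSelections hLp).2 (.of_forall mem_J)))
  filter_upwards [mem_J'] with ω hω hωs
  rwa [Set.indicator_of_mem hωs] at hω

theorem lpSelections_le_iff [SigmaFinite μ] (hJ : IsMeasurableRangeFunction J)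
    (hJ' : ∀ ω, IsClosed (J' ω : Set H)) :
    lpSelections J p μ ≤ lpSelections J' p μ ↔ ∀ᵐ ω ∂μ, J ω ≤ J' ω := by
  refine ⟨fun h => ?_, lpSelections_mono⟩
  have := hJ.hasOrthogonalProjection
  filter_upwards [ae_all_iff.2 fun n =>
    hJ.ae_starProjection_mem_of_lpSelections_le h (TopologicalSpace.denseSeq H n)] with ω hω
  exact le_of_forall_starProjection_mem_of_denseRange
    (TopologicalSpace.denseRange_denseSeq H) (hJ' ω) hω

end IsMeasurableRangeFunction

theorem MJ_eq_iff_range_functions_ae_eq_general [TopologicalSpace.SeparableSpace H]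
    [SigmaFinite μ] (hJ : IsMeasurableRangeFunction J) (hJ' : IsMeasurableRangeFunction J') :
    lpSelections J p μ = lpSelections J' p μ ↔ ∀ᵐ ω ∂μ, J ω = J' ω := by
  simp only [le_antisymm_iff, hJ.lpSelections_le_iff hJ'.isClosed,
    hJ'.lpSelections_le_iff hJ.isClosed, Filter.eventually_and]

end RangeFunction

instance sigmaFinite_torusMeasure (r : ℕ) : SigmaFinite (torusMeasure r) :=
  inferInstanceAs (SigmaFinite (volume.restrict (cube r)))

/-- For measurable range functions `J, J'` (measurability expressed via families `P, P'` of
orthogonal projections onto the fibers), `M_J = M_{J'}` iff `J(σ) = J'(σ)` for a.e. `σ`. -/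
theorem MJ_eq_iff_range_functions_ae_eq (r : ℕ) (hr : 0 < r)
    {H : Type} [NormedAddCommGroup H] [InnerProductSpace ℂ H] [CompleteSpace H]
    [TopologicalSpace.SeparableSpace H]
    (J J' : (Fin r → ℝ) → Submodule ℂ H)
    (hJcl : ∀ σ, IsClosed (J σ : Set H)) (hJ'cl : ∀ σ, IsClosed (J' σ : Set H))
    (P P' : (Fin r → ℝ) → H →L[ℂ] H)
    (hP : ∀ σ (u : H), P σ u ∈ J σ ∧ u - P σ u ∈ (J σ)ᗮ)
    (hP' : ∀ σ (u : H), P' σ u ∈ J' σ ∧ u - P' σ u ∈ (J' σ)ᗮ)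
    (hPmeas : ∀ u v : H, Measurable fun σ => (inner ℂ (P σ u) v : ℂ))
    (hP'meas : ∀ u v : H, Measurable fun σ => (inner ℂ (P' σ u) v : ℂ)) :
    {a : Lp H 2 (torusMeasure r) | ∀ᵐ σ ∂(torusMeasure r), ⇑a σ ∈ J σ} =
      {a : Lp H 2 (torusMeasure r) | ∀ᵐ σ ∂(torusMeasure r), ⇑a σ ∈ J' σ} ↔
    ∀ᵐ σ ∂(torusMeasure r), J σ = J' σ := by
  simpa only [← SetLike.coe_set_eq, coe_lpSelections] using
    MJ_eq_iff_range_functions_ae_eq_general (p := 2) (μ := torusMeasure r)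
      (.of_projections hP hPmeas) (.of_projections hP' hP'meas)
end
end

section
/- Let M be a closed linear subspace of L²(𝕋^r, H). The following are equivalent: (i) for every a ∈ M, every m ∈ ℤ^r and every k ∈ K, both e_m·a ∈ M and Ũ_k a ∈ M; (ii) there exists a measurable range function J, unique up to equality a.e., such that M = M_J and for each k ∈ K, U_k(σ)(J(σ)) ⊆ J(σ) for a.e. σ ∈ 𝕋^r. -/
open MeasureTheory
open scoped ENNReal NNReal

noncomputable section

/-- The character `e_m(σ) = exp(2πi⟨m,σ⟩)` on `𝕋^r`. -/
def char {r : ℕ} (m : Fin r → ℤ) (σ : Fin r → ℝ) : ℂ :=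
  Complex.exp (2 * (Real.pi : ℂ) * Complex.I * ∑ j, (m j : ℂ) * (σ j : ℂ))

/-! If `M` is invariant under multiplication by the functions `φ i`, `b ∈ M` and `c ∈ Mᗮ`, then
`∫ φ i * ⟪c, b⟫ = ⟪c, φ i • b⟫ = 0` for every `i`. When the `φ i` separate integrable functions, as
the characters do by Stone–Weierstrass, this makes `c x` and `b x` orthogonal for almost every `x`.
Hence, with `J x` the closed span of the values at `x` of a dense sequence in `M`, the space `M_J`
contains `M` and meets `Mᗮ` only in `0`, so `M = M_J`.

Uniqueness of `J` and the invariance of its fibres both follow from one fact: `M_J ⊆ M_J'` if and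
only if `J x ⊆ J' x` for almost every `x`. -/

open Filter Topology InnerProductSpace
open scoped BoundedContinuousFunction
open Submodule (span)
open TopologicalSpace (SeparableSpace denseSeq denseRange_denseSeq)

section GramSchmidt

variable {𝕜 H : Type*} [RCLike 𝕜] [NormedAddCommGroup H] [InnerProductSpace 𝕜 H]

lemma starProjection_span_image_Iio_eq_sum {ι : Type*} [LinearOrder ι] [LocallyFiniteOrderBot ι]
    [WellFoundedLT ι] (f : ι → H) (n : ι) [(span 𝕜 (f '' Set.Iio n)).HasOrthogonalProjection]
    (v : H) :
    (span 𝕜 (f '' Set.Iio n)).starProjection v =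
      ∑ i ∈ Finset.Iio n, (𝕜 ∙ gramSchmidt 𝕜 f i).starProjection v := by
  set g := gramSchmidt 𝕜 f
  have hg : span 𝕜 (g '' Set.Iio n) = span 𝕜 (f '' Set.Iio n) := span_gramSchmidt_Iio 𝕜 f n
  refine Submodule.eq_starProjection_of_mem_orthogonal (v := ∑ i ∈ Finset.Iio n, _) ?_ ?_
  · rw [← hg]
    refine sum_mem fun i hi => ?_
    have hi : 𝕜 ∙ g i ≤ span 𝕜 (g '' Set.Iio n) := Submodule.span_mono <|
      Set.singleton_subset_iff.2 (Set.mem_image_of_mem g (Finset.mem_Iio.1 hi))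
    exact hi (Submodule.starProjection_apply_mem _ v)
  · rw [← hg, Submodule.mem_orthogonal]
    suffices h : span 𝕜 (g '' Set.Iio n) ≤
        (𝕜 ∙ (v - ∑ i ∈ Finset.Iio n, (𝕜 ∙ g i).starProjection v))ᗮ from
      fun w hw => Submodule.mem_orthogonal_singleton_iff_inner_left.1 (h hw)
    rw [Submodule.span_le]
    rintro _ ⟨j, hj, rfl⟩
    have hother : ∀ i ∈ Finset.Iio n, i ≠ j → ⟪g j, (𝕜 ∙ g i).starProjection v⟫_𝕜 = 0 := by
      intro i _ hij
      rw [Submodule.starProjection_singleton, inner_smul_right,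
        gramSchmidt_orthogonal 𝕜 f hij.symm, mul_zero]
    have hself : ⟪g j, v - (𝕜 ∙ g j).starProjection v⟫_𝕜 = 0 :=
      Submodule.sub_starProjection_mem_orthogonal v _ (Submodule.mem_span_singleton_self _)
    rw [SetLike.mem_coe, Submodule.mem_orthogonal_singleton_iff_inner_left, inner_sub_right,
      inner_sum, Finset.sum_eq_single_of_mem j (Finset.mem_Iio.2 hj) hother, ← inner_sub_right,
      hself]

lemma tendsto_sum_starProjection_gramSchmidt (f : ℕ → H)
    [(span 𝕜 (Set.range f)).topologicalClosure.HasOrthogonalProjection] (v : H) :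
    Tendsto (fun n => ∑ i ∈ Finset.Iio n, (𝕜 ∙ gramSchmidt 𝕜 f i).starProjection v) atTop
      (𝓝 ((span 𝕜 (Set.range f)).topologicalClosure.starProjection v)) := by
  have hfin (n : ℕ) : FiniteDimensional 𝕜 (span 𝕜 (f '' Set.Iio n)) :=
    FiniteDimensional.span_of_finite 𝕜 ((Set.finite_Iio n).image f)
  have hsup : ⨆ n, span 𝕜 (f '' Set.Iio n) = span 𝕜 (Set.range f) := by
    rw [← Submodule.span_iUnion, ← Set.image_iUnion, Set.iUnion_Iio, Set.image_univ]
  have hmono : Monotone fun n => span 𝕜 (f '' Set.Iio n) := fun _ _ h =>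
    Submodule.span_mono (Set.image_mono (Set.Iio_subset_Iio h))
  have : (⨆ n, span 𝕜 (f '' Set.Iio n)).topologicalClosure.HasOrthogonalProjection := by
    rw [hsup]; infer_instance
  simpa only [starProjection_span_image_Iio_eq_sum, hsup] using
    Submodule.starProjection_tendsto_closure_iSup _ hmono v

end GramSchmidt

section Measurability

variable {X 𝕜 H : Type*} [MeasurableSpace X] [RCLike 𝕜] [NormedAddCommGroup H]
  [InnerProductSpace 𝕜 H]

lemma stronglyMeasurable_starProjection_singleton {f g : X → H} (hf : StronglyMeasurable f)
    (hfg : StronglyMeasurable fun x => ⟪f x, g x⟫_𝕜) :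
    StronglyMeasurable fun x => (𝕜 ∙ f x).starProjection (g x) := by
  simp only [Submodule.starProjection_singleton]
  refine StronglyMeasurable.smul (hfg.measurable.div ?_).stronglyMeasurable hf
  exact RCLike.measurable_ofReal.comp (hf.norm.measurable.pow_const 2)

lemma stronglyMeasurable_gramSchmidt {ι : Type*} [LinearOrder ι] [LocallyFiniteOrderBot ι]
    [WellFoundedLT ι] {f : ι → X → H} (hf : ∀ i, StronglyMeasurable (f i)) (n : ι) :
    StronglyMeasurable fun x => gramSchmidt 𝕜 (f · x) n := by
  induction n using WellFoundedLT.induction with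
  | ind n ih =>
    rw [funext fun x => gramSchmidt_def 𝕜 (f · x) n]
    exact (hf n).sub <| Finset.stronglyMeasurable_fun_sum (Finset.Iio n) fun i hi =>
      stronglyMeasurable_starProjection_singleton (𝕜 := 𝕜) (ih i (Finset.mem_Iio.1 hi))
        ((ih i (Finset.mem_Iio.1 hi)).inner (hf n))

lemma stronglyMeasurable_starProjection_closure_span {f : ℕ → X → H}
    (hf : ∀ n, StronglyMeasurable (f n))
    [∀ x, (span 𝕜 (Set.range (f · x))).topologicalClosure.HasOrthogonalProjection] (v : H) :
    StronglyMeasurable fun x =>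
      (span 𝕜 (Set.range (f · x))).topologicalClosure.starProjection v :=
  stronglyMeasurable_of_tendsto atTop
    (fun n => Finset.stronglyMeasurable_fun_sum (Finset.Iio n) fun i _ =>
      stronglyMeasurable_starProjection_singleton (stronglyMeasurable_gramSchmidt hf i)
        ((stronglyMeasurable_gramSchmidt hf i).inner stronglyMeasurable_const))
    (tendsto_pi_nhds.2 fun x => tendsto_sum_starProjection_gramSchmidt (f · x) v)

-- Pettis theorem: the partial Gram–Schmidt expansions of `f` in a dense sequence are measurable.
lemma stronglyMeasurable_of_measurable_inner_s6 [SeparableSpace H] {f : X → H}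
    (hf : ∀ v, Measurable fun x => ⟪f x, v⟫_𝕜) : StronglyMeasurable f := by
  let u := denseSeq H
  have hu : (span 𝕜 (Set.range u)).topologicalClosure = ⊤ :=
    Submodule.dense_iff_topologicalClosure_eq_top.1
      ((denseRange_denseSeq H).mono Submodule.subset_span)
  have : (span 𝕜 (Set.range u)).topologicalClosure.HasOrthogonalProjection := by
    rw [hu]; infer_instance
  refine stronglyMeasurable_of_tendsto atTop
    (f := fun n x => ∑ i ∈ Finset.Iio n, (𝕜 ∙ gramSchmidt 𝕜 u i).starProjection (f x))
    (fun n => Finset.stronglyMeasurable_fun_sum _ fun i _ =>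
      stronglyMeasurable_starProjection_singleton stronglyMeasurable_const ?_)
    (tendsto_pi_nhds.2 fun x => ?_)
  · simpa only [Function.comp_def, inner_conj_symm] using
      (RCLike.continuous_conj.measurable.comp (hf (gramSchmidt 𝕜 u i))).stronglyMeasurable
  · simpa only [hu, Submodule.starProjection_top, ContinuousLinearMap.id_apply] using
      tendsto_sum_starProjection_gramSchmidt (𝕜 := 𝕜) u (f x)

end Measurability

section Determining

variable {X 𝕜 : Type*} [MeasurableSpace X] [RCLike 𝕜] {μ : Measure X}

lemma ae_eq_zero_of_forall_integral_boundedContinuous_smul_eq_zero {E : Type*}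
    [NormedAddCommGroup E] [NormedSpace ℝ E] [CompleteSpace E] [TopologicalSpace X] [BorelSpace X]
    [HasOuterApproxClosed X] {f : X → E} (hf : Integrable f μ)
    (h : ∀ g : X →ᵇ ℝ≥0, ∫ x, (g x : ℝ) • f x ∂μ = 0) : f =ᵐ[μ] 0 := by
  refine ae_eq_zero_of_forall_setIntegral_isClosed_eq_zero hf fun s hs => ?_
  have hlim : Tendsto (fun n => ∫ x, (hs.apprSeq n x : ℝ) • f x ∂μ) atTop
      (𝓝 (∫ x, s.indicator f x ∂μ)) := by
    refine tendsto_integral_of_dominated_convergence (fun x => ‖f x‖) (fun n => ?_) hf.norm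
      (fun n => Eventually.of_forall fun x => ?_) (Eventually.of_forall fun x => ?_)
    · exact (NNReal.continuous_coe.comp (hs.apprSeq n).continuous).aestronglyMeasurable.smul hf.1
    · rw [norm_smul, Real.norm_of_nonneg (NNReal.coe_nonneg _)]
      exact mul_le_of_le_one_left (norm_nonneg _)
        (mod_cast HasOuterApproxClosed.apprSeq_apply_le_one hs n x)
    · have hx := tendsto_pi_nhds.1 (HasOuterApproxClosed.tendsto_apprSeq hs) x
      have := ((NNReal.continuous_coe.tendsto _).comp hx).smul_const (f x)
      by_cases hxs : x ∈ s <;> simpa [hxs] using this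
  rw [← integral_indicator hs.measurableSet]
  exact tendsto_nhds_unique hlim (by simp only [h, tendsto_const_nhds])

lemma ae_eq_zero_of_forall_integral_mul_eq_zero_of_span_closure_eq_top [TopologicalSpace X]
    [BorelSpace X] [CompactSpace X] [HasOuterApproxClosed X] {S : Set C(X, 𝕜)}
    (hS : (span 𝕜 S).topologicalClosure = ⊤) {f : X → 𝕜} (hf : Integrable f μ)
    (h : ∀ g ∈ S, ∫ x, g x * f x ∂μ = 0) : f =ᵐ[μ] 0 := by
  have hint (g : C(X, 𝕜)) : Integrable (fun x => g x * f x) μ :=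
    hf.bdd_mul g.continuous.aestronglyMeasurable (Eventually.of_forall g.norm_coe_le_norm)
  let L : C(X, 𝕜) →L[𝕜] 𝕜 := LinearMap.mkContinuous
    { toFun g := ∫ x, g x * f x ∂μ
      map_add' g₁ g₂ := by
        simp only [ContinuousMap.add_apply, add_mul, integral_add (hint g₁) (hint g₂)]
      map_smul' c g := by
        simp only [ContinuousMap.smul_apply, smul_mul_assoc, integral_smul, RingHom.id_apply] }
    (∫ x, ‖f x‖ ∂μ) fun g => by
      rw [mul_comm, ← integral_const_mul]
      refine norm_integral_le_of_norm_le (hf.norm.const_mul _) (Eventually.of_forall fun x => ?_)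
      rw [norm_mul]
      exact mul_le_mul_of_nonneg_right (g.norm_coe_le_norm x) (norm_nonneg _)
  have hL : L = 0 := ContinuousLinearMap.ext_on
    (Submodule.dense_iff_topologicalClosure_eq_top.2 hS) h
  refine ae_eq_zero_of_forall_integral_boundedContinuous_smul_eq_zero hf fun g => ?_
  simp only [RCLike.real_smul_eq_coe_mul]
  exact DFunLike.congr_fun hL ⟨fun x => ((g x : ℝ) : 𝕜), by fun_prop⟩

/-- A family of essentially bounded functions is a determining set for `L¹(μ)` (in the sense of
Bownik and Ross) if an integrable function orthogonal to all of them vanishes almost everywhere. -/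
structure IsDetermining {ι : Type*} (φ : ι → X → 𝕜) (μ : Measure X) : Prop where
  memLp_top : ∀ i, MemLp (φ i) ∞ μ
  ae_eq_zero : ∀ f, Integrable f μ → (∀ i, ∫ x, φ i x * f x ∂μ = 0) → f =ᵐ[μ] 0

lemma IsDetermining.comp_of_ae_leftInverse {ι Y : Type*} [MeasurableSpace Y] {φ : ι → Y → 𝕜}
    {q : X → Y} (hφ : IsDetermining φ (μ.map q)) (hq : Measurable q) {s : Y → X}
    (hs : Measurable s) (hsq : ∀ᵐ x ∂μ, s (q x) = x) :
    IsDetermining (fun i x => φ i (q x)) μ where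
  memLp_top i := (hφ.memLp_top i).comp_of_map hq.aemeasurable
  ae_eq_zero f hf h := by
    let g := hf.1.mk f
    have hg : StronglyMeasurable fun y => g (s y) := hf.1.stronglyMeasurable_mk.comp_measurable hs
    have hgf : (fun x => g (s (q x))) =ᵐ[μ] f := by
      filter_upwards [hsq, hf.1.ae_eq_mk] with x hx hfx
      rw [hx, hfx]
    have hzero : (fun y => g (s y)) =ᵐ[μ.map q] 0 := by
      refine hφ.ae_eq_zero _ ?_ fun i => ?_
      · rw [integrable_map_measure hg.aestronglyMeasurable hq.aemeasurable]
        exact hf.congr hgf.symm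
      · calc ∫ y, φ i y * g (s y) ∂μ.map q
          _ = ∫ x, φ i (q x) * g (s (q x)) ∂μ := integral_map hq.aemeasurable
            ((hφ.memLp_top i).1.mul hg.aestronglyMeasurable)
          _ = ∫ x, φ i (q x) * f x ∂μ := integral_congr_ae (EventuallyEq.rfl.mul hgf)
          _ = 0 := h i
    exact hgf.symm.trans (ae_of_ae_map hq.aemeasurable hzero)

end Determining

section Characters

lemma isDetermining_mFourier {d : Type*} [Fintype d] (μ : Measure (UnitAddTorus d))
    [IsFiniteMeasure μ] :
    IsDetermining (fun (m : d → ℤ) (x : UnitAddTorus d) => UnitAddTorus.mFourier m x) μ where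
  memLp_top m := .of_bound (UnitAddTorus.mFourier m).continuous.aestronglyMeasurable _ <|
    Eventually.of_forall (UnitAddTorus.mFourier m).norm_coe_le_norm
  ae_eq_zero _ hf h := ae_eq_zero_of_forall_integral_mul_eq_zero_of_span_closure_eq_top
    (UnitAddTorus.span_mFourier_closure_eq_top (d := d)) hf (Set.forall_mem_range.2 h)

lemma mFourier_coe_eq_char {r : ℕ} (m : Fin r → ℤ) (σ : Fin r → ℝ) :
    UnitAddTorus.mFourier m (fun j => (σ j : UnitAddCircle)) = char m σ := by
  simp only [UnitAddTorus.mFourier, ContinuousMap.coe_mk, fourier_coe_apply, char]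
  rw [← Complex.exp_sum, Finset.mul_sum]
  congr 1
  refine Finset.sum_congr rfl fun j _ => ?_
  rw [Complex.ofReal_one, div_one]
  ring

instance isFiniteMeasure_torusMeasure (r : ℕ) : IsFiniteMeasure (torusMeasure r) :=
  isFiniteMeasure_restrict.2 <| ne_of_lt <|
    (measure_mono (Set.pi_mono fun _ _ => Set.Ico_subset_Icc_self)).trans_lt
      (isCompact_univ_pi fun _ => isCompact_Icc).measure_lt_top

lemma isDetermining_char (r : ℕ) : IsDetermining (char (r := r)) (torusMeasure r) := by
  let q (σ : Fin r → ℝ) : UnitAddTorus (Fin r) := fun j => (σ j : UnitAddCircle)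
  let s (x : UnitAddTorus (Fin r)) : Fin r → ℝ := fun j =>
    (AddCircle.measurableEquivIco 1 0 (x j) : Set.Ico (0 : ℝ) (0 + 1))
  have hq : Measurable q :=
    (continuous_pi fun j => (AddCircle.continuous_mk' 1).comp (continuous_apply j)).measurable
  have hs : Measurable s := measurable_pi_lambda _ fun j => measurable_subtype_coe.comp <|
    (AddCircle.measurableEquivIco 1 0).measurable.comp (measurable_pi_apply j)
  have hsq : ∀ᵐ σ ∂torusMeasure r, s (q σ) = σ := by
    filter_upwards [ae_restrict_mem (MeasurableSet.univ_pi fun _ => measurableSet_Ico)] with σ hσ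
    funext j
    have hj : σ j ∈ Set.Ico (0 : ℝ) (0 + 1) := by simpa only [zero_add] using hσ j trivial
    exact congrArg Subtype.val (AddCircle.equivIco_coe_eq hj)
  simpa only [q, mFourier_coe_eq_char] using
    (isDetermining_mFourier ((torusMeasure r).map q)).comp_of_ae_leftInverse hq hs hsq

end Characters

section RangeSubspace

variable {X 𝕜 E : Type*} [MeasurableSpace X] [RCLike 𝕜] [NormedAddCommGroup E] [NormedSpace 𝕜 E]
  {μ : Measure X} {p : ℝ≥0∞} {J J' : X → Submodule 𝕜 E}

/-- The space `M_J` of `Lᵖ` functions whose values lie almost everywhere in the fibres of the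
range function `J`. -/
def rangeSubspace (J : X → Submodule 𝕜 E) (p : ℝ≥0∞) (μ : Measure X) :
    Submodule 𝕜 (Lp E p μ) where
  carrier := {a | ∀ᵐ x ∂μ, a x ∈ J x}
  zero_mem' := by
    filter_upwards [Lp.coeFn_zero E p μ] with x hx
    rw [hx]
    exact (J x).zero_mem
  add_mem' {a b} ha hb := by
    rw [Set.mem_ofPred_eq] at ha hb ⊢
    filter_upwards [Lp.coeFn_add a b, ha, hb] with x hx hax hbx
    rw [hx]
    exact (J x).add_mem hax hbx
  smul_mem' c a ha := by
    rw [Set.mem_ofPred_eq] at ha ⊢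
    filter_upwards [Lp.coeFn_smul c a, ha] with x hx hax
    rw [hx]
    exact (J x).smul_mem c hax

lemma coe_rangeSubspace :
    (rangeSubspace J p μ : Set (Lp E p μ)) = {a | ∀ᵐ x ∂μ, a x ∈ J x} := rfl

lemma mem_rangeSubspace {a : Lp E p μ} : a ∈ rangeSubspace J p μ ↔ ∀ᵐ x ∂μ, a x ∈ J x := Iff.rfl

lemma toLp_mem_rangeSubspace {f : X → E} (hf : MemLp f p μ) :
    hf.toLp f ∈ rangeSubspace J p μ ↔ ∀ᵐ x ∂μ, f x ∈ J x :=
  eventually_congr <| hf.coeFn_toLp.mono fun x hx => by rw [hx]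

lemma isClosed_rangeSubspace [Fact (1 ≤ p)] (hJ : ∀ x, IsClosed (J x : Set E)) :
    IsClosed (rangeSubspace J p μ : Set (Lp E p μ)) := by
  refine IsSeqClosed.isClosed fun a b ha hab => ?_
  obtain ⟨ns, -, hns⟩ := (tendstoInMeasure_of_tendsto_Lp hab).exists_seq_tendsto_ae
  filter_upwards [hns, ae_all_iff.2 ha] with x hx hax
  exact (hJ x).mem_of_tendsto hx (Eventually.of_forall fun n => hax (ns n))

lemma ae_mem_of_rangeSubspace_le [SigmaFinite μ] (hle : rangeSubspace J p μ ≤ rangeSubspace J' p μ)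
    {f : X → E} (hf : AEStronglyMeasurable f μ) {C : ℝ} (hC : ∀ᵐ x ∂μ, ‖f x‖ ≤ C)
    (hfJ : ∀ᵐ x ∂μ, f x ∈ J x) : ∀ᵐ x ∂μ, f x ∈ J' x := by
  have hn (n : ℕ) : ∀ᵐ x ∂μ, (spanningSets μ n).indicator f x ∈ J' x := by
    have : IsFiniteMeasure (μ.restrict (spanningSets μ n)) :=
      isFiniteMeasure_restrict.2 (measure_spanningSets_lt_top μ n).ne
    have hmem : MemLp ((spanningSets μ n).indicator f) p μ :=
      (memLp_indicator_iff_restrict (measurableSet_spanningSets μ n)).2 <|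
        .of_bound hf.restrict C (ae_restrict_of_ae hC)
    refine (toLp_mem_rangeSubspace hmem).1 (hle ((toLp_mem_rangeSubspace hmem).2 ?_))
    filter_upwards [hfJ] with x hx
    by_cases hxn : x ∈ spanningSets μ n
    · simpa only [Set.indicator_of_mem hxn] using hx
    · simp only [Set.indicator_of_notMem hxn, zero_mem]
  filter_upwards [ae_all_iff.2 hn] with x hx
  simpa only [Set.indicator_of_mem (mem_spanningSetsIndex μ x)] using hx (spanningSetsIndex μ x)

lemma exists_mem_rangeSubspace_smul {φ : X → 𝕜} (hφ : MemLp φ ∞ μ) {a : Lp E p μ}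
    (ha : a ∈ rangeSubspace J p μ) :
    ∃ b ∈ rangeSubspace J p μ, ⇑b =ᵐ[μ] fun x => φ x • a x := by
  have hmem : MemLp (fun x => φ x • a x) p μ := (Lp.memLp a).smul hφ
  exact ⟨hmem.toLp _, (toLp_mem_rangeSubspace hmem).2 <|
    (mem_rangeSubspace.1 ha).mono fun x hx => (J x).smul_mem _ hx, hmem.coeFn_toLp⟩

lemma memLp_clm_apply {F : Type*} [NormedAddCommGroup F] [NormedSpace 𝕜 F]
    [SeparableSpace E] {T : X → E →L[𝕜] F}
    (hT : ∀ v, StronglyMeasurable fun x => T x v) {C : ℝ} (hC : ∀ᵐ x ∂μ, ‖T x‖ ≤ C) {f : X → E}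
    (hf : MemLp f p μ) : MemLp (fun x => T x (f x)) p μ := by
  borelize E
  have : SecondCountableTopology E := UniformSpace.secondCountable_of_separable E
  obtain ⟨g, hg, hfg⟩ := hf.aestronglyMeasurable
  have hTg : StronglyMeasurable fun x => T x (g x) :=
    (stronglyMeasurable_uncurry_of_continuous_of_stronglyMeasurable
      (u := fun v x => T x v) (fun x => (T x).continuous) hT).comp_measurable
        (hg.measurable.prodMk measurable_id)
  refine hf.of_le_mul (c := C) ⟨_, hTg, hfg.mono fun x hx => congrArg (T x) hx⟩ ?_
  filter_upwards [hC] with x hx using (T x).le_of_opNorm_le hx _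

end RangeSubspace

section RangeFunction

variable {X 𝕜 H : Type*} [MeasurableSpace X] [RCLike 𝕜] [NormedAddCommGroup H]
  [InnerProductSpace 𝕜 H] {μ : Measure X} {p : ℝ≥0∞} {J J' : X → Submodule 𝕜 H}

/-- A measurable range function: its fibres are closed and the orthogonal projections `P` onto
them are weakly measurable. -/
def IsMeasurableRange (J : X → Submodule 𝕜 H) : Prop :=
  (∀ x, IsClosed (J x : Set H)) ∧
    ∃ P : X → H →L[𝕜] H, (∀ x u, P x u ∈ J x ∧ u - P x u ∈ (J x)ᗮ) ∧
      ∀ u v, Measurable fun x => ⟪P x u, v⟫_𝕜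

lemma isMeasurableRange_of_stronglyMeasurable_starProjection
    [∀ x, (J x).HasOrthogonalProjection]
    (hm : ∀ u, StronglyMeasurable fun x => (J x).starProjection u) : IsMeasurableRange J :=
  ⟨fun x => (J x).orthogonal_orthogonal ▸ (J x)ᗮ.isClosed_orthogonal, fun x => (J x).starProjection,
    fun _ u => ⟨Submodule.starProjection_apply_mem _ u,
      Submodule.sub_starProjection_mem_orthogonal u⟩,
    fun u _ => ((hm u).inner stronglyMeasurable_const).measurable⟩

lemma IsMeasurableRange.hasOrthogonalProjection (hJ : IsMeasurableRange J) (x : X) :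
    (J x).HasOrthogonalProjection :=
  let ⟨_, P, hP, _⟩ := hJ
  ⟨fun u => ⟨P x u, hP x u⟩⟩

lemma IsMeasurableRange.stronglyMeasurable_starProjection [SeparableSpace H]
    (hJ : IsMeasurableRange J) [∀ x, (J x).HasOrthogonalProjection] (u : H) :
    StronglyMeasurable fun x => (J x).starProjection u := by
  obtain ⟨-, P, hP, hPm⟩ := hJ
  have hPJ (x : X) : (J x).starProjection u = P x u :=
    Submodule.eq_starProjection_of_mem_orthogonal (hP x u).1 (hP x u).2
  simp only [hPJ]
  exact stronglyMeasurable_of_measurable_inner_s6 (𝕜 := 𝕜) (hPm u)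

-- The projections of a dense sequence onto the fibres are sections of `J` that span every fibre.
lemma rangeSubspace_le_rangeSubspace_iff [SigmaFinite μ] [SeparableSpace H]
    (hJ : IsMeasurableRange J) (hJ' : ∀ x, IsClosed (J' x : Set H)) :
    rangeSubspace J p μ ≤ rangeSubspace J' p μ ↔ ∀ᵐ x ∂μ, J x ≤ J' x := by
  refine ⟨fun hle => ?_, fun hle a ha => ?_⟩
  · have := hJ.hasOrthogonalProjection
    have hdense (k : ℕ) :
        ∀ᵐ x ∂μ, (J x).starProjection (denseSeq H k) ∈ J' x :=
      ae_mem_of_rangeSubspace_le hle (hJ.stronglyMeasurable_starProjection _).aestronglyMeasurable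
        (Eventually.of_forall fun x => Submodule.norm_starProjection_apply_le (J x) _)
        (Eventually.of_forall fun x => Submodule.starProjection_apply_mem (J x) _)
    filter_upwards [ae_all_iff.2 hdense] with x hx v hv
    rw [← Submodule.starProjection_eq_self_iff.2 hv]
    exact (denseRange_denseSeq H).induction_on
      (p := fun v => (J x).starProjection v ∈ J' x) v
      ((hJ' x).preimage (J x).starProjection.continuous) hx
  · filter_upwards [hle, mem_rangeSubspace.1 ha] with x hx hax using hx hax

lemma rangeSubspace_eq_rangeSubspace_iff [SigmaFinite μ] [SeparableSpace H]
    (hJ : IsMeasurableRange J) (hJ' : IsMeasurableRange J') :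
    rangeSubspace J p μ = rangeSubspace J' p μ ↔ ∀ᵐ x ∂μ, J x = J' x := by
  simp only [le_antisymm_iff, rangeSubspace_le_rangeSubspace_iff hJ hJ'.1,
    rangeSubspace_le_rangeSubspace_iff hJ' hJ.1, eventually_and]

lemma forall_exists_mem_rangeSubspace_apply_iff [SigmaFinite μ] [SeparableSpace H]
    (hJ : IsMeasurableRange J) {T : X → H →L[𝕜] H} (hT : ∀ v, StronglyMeasurable fun x => T x v)
    {C : ℝ} (hC : ∀ᵐ x ∂μ, ‖T x‖ ≤ C) :
    (∀ a ∈ rangeSubspace J p μ, ∃ b ∈ rangeSubspace J p μ, ⇑b =ᵐ[μ] fun x => T x (a x)) ↔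
      ∀ᵐ x ∂μ, ∀ v ∈ J x, T x v ∈ J x := by
  -- Invariance of `M_J` under `T` is the inclusion of `M_J` in the space of `x ↦ (T x)⁻¹(J x)`.
  have hcomap := rangeSubspace_le_rangeSubspace_iff (μ := μ) (p := p) hJ
    (J' := fun x => (J x).comap (T x : H →ₗ[𝕜] H)) fun x => (hJ.1 x).preimage (T x).continuous
  refine Iff.trans (forall₂_congr fun a _ => ?_) hcomap
  constructor
  · rintro ⟨b, hb, hab⟩
    filter_upwards [mem_rangeSubspace.1 hb, hab] with x hbx hx
    rw [hx] at hbx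
    exact hbx
  · intro ha
    have hmem := memLp_clm_apply hT hC (Lp.memLp a)
    exact ⟨hmem.toLp _, (toLp_mem_rangeSubspace hmem).2 ha, hmem.coeFn_toLp⟩

end RangeFunction

section Helson

variable {X 𝕜 H ι : Type*} [MeasurableSpace X] [RCLike 𝕜] [NormedAddCommGroup H]
  [InnerProductSpace 𝕜 H] {μ : Measure X} {φ : ι → X → 𝕜} {M : Submodule 𝕜 (Lp H 2 μ)}

lemma IsDetermining.inner_ae_eq_zero (hφ : IsDetermining φ μ)
    (hM : ∀ a ∈ M, ∀ i, ∃ b ∈ M, ⇑b =ᵐ[μ] fun x => φ i x • a x) {a c : Lp H 2 μ} (ha : a ∈ M)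
    (hc : c ∈ Mᗮ) : ∀ᵐ x ∂μ, ⟪c x, a x⟫_𝕜 = 0 := by
  refine hφ.ae_eq_zero _ (L2.integrable_inner c a) fun i => ?_
  obtain ⟨b, hb, hba⟩ := hM a ha i
  have hcb : ⟪c, b⟫_𝕜 = 0 := Submodule.inner_left_of_mem_orthogonal hb hc
  rw [L2.inner_def] at hcb
  rw [← hcb]
  refine integral_congr_ae ?_
  filter_upwards [hba] with x hx
  rw [hx, inner_smul_right]

variable (𝕜) in
/-- The range function generated by a family of `H`-valued functions: its fibre at `x` is the
closed linear span of the values at `x`. -/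
def closedSpanRange (f : ι → X → H) (x : X) : Submodule 𝕜 H :=
  (span 𝕜 (Set.range (f · x))).topologicalClosure

lemma isMeasurableRange_closedSpanRange [CompleteSpace H] {f : ℕ → X → H}
    (hf : ∀ n, StronglyMeasurable (f n)) : IsMeasurableRange (closedSpanRange 𝕜 f) := by
  have (x : X) : (closedSpanRange 𝕜 f x).HasOrthogonalProjection :=
    have := (Submodule.isClosed_topologicalClosure (span 𝕜 (Set.range (f · x)))).completeSpace_coe
    inferInstanceAs (Submodule.topologicalClosure _).HasOrthogonalProjection
  exact isMeasurableRange_of_stronglyMeasurable_starProjection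
    (stronglyMeasurable_starProjection_closure_span hf)

lemma le_rangeSubspace_closedSpanRange {p : ℝ≥0∞} [Fact (1 ≤ p)] {N : Submodule 𝕜 (Lp H p μ)}
    {u : ι → N} (hu : DenseRange u) :
    N ≤ rangeSubspace (closedSpanRange 𝕜 fun i => ⇑(u i : Lp H p μ)) p μ :=
  fun a ha => hu.induction_on
    (p := fun b : N => (b : Lp H p μ) ∈
      rangeSubspace (closedSpanRange 𝕜 fun i => ⇑(u i : Lp H p μ)) p μ) ⟨a, ha⟩
    ((isClosed_rangeSubspace fun _ => Submodule.isClosed_topologicalClosure _).preimage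
      continuous_subtype_val)
    fun i => mem_rangeSubspace.2 <| Eventually.of_forall fun _ =>
      Submodule.le_topologicalClosure _ (Submodule.subset_span ⟨i, rfl⟩)

lemma IsDetermining.disjoint_rangeSubspace_closedSpanRange_orthogonal {κ : Type*} [Countable κ]
    (hφ : IsDetermining φ μ)
    (hM : ∀ a ∈ M, ∀ i, ∃ b ∈ M, ⇑b =ᵐ[μ] fun x => φ i x • a x) (u : κ → M) :
    Disjoint (rangeSubspace (closedSpanRange 𝕜 fun k => ⇑(u k : Lp H 2 μ)) 2 μ) Mᗮ := by
  refine Submodule.disjoint_def.2 fun c hc hcM => (Lp.eq_zero_iff_ae_eq_zero).2 ?_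
  have horth : ∀ᵐ x ∂μ, ∀ k, ⟪c x, (u k : Lp H 2 μ) x⟫_𝕜 = 0 :=
    ae_all_iff.2 fun k => hφ.inner_ae_eq_zero hM (u k).2 hcM
  filter_upwards [horth, mem_rangeSubspace.1 hc] with x hx hcx
  have hle : closedSpanRange 𝕜 (fun k => ⇑(u k : Lp H 2 μ)) x ≤ (𝕜 ∙ c x)ᗮ :=
    Submodule.topologicalClosure_minimal _
      (Submodule.span_le.2 <| Set.range_subset_iff.2 fun k =>
        Submodule.mem_orthogonal_singleton_iff_inner_right.2 (hx k))
      (Submodule.isClosed_orthogonal _)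
  exact inner_self_eq_zero.1 (Submodule.mem_orthogonal_singleton_iff_inner_right.1 (hle hcx))

theorem IsDetermining.exists_eq_rangeSubspace [CompleteSpace H] [SeparableSpace H]
    [IsSeparable μ] (hφ : IsDetermining φ μ) (hMcl : IsClosed (M : Set (Lp H 2 μ)))
    (hM : ∀ a ∈ M, ∀ i, ∃ b ∈ M, ⇑b =ᵐ[μ] fun x => φ i x • a x) :
    ∃ J : X → Submodule 𝕜 H, IsMeasurableRange J ∧ M = rangeSubspace J 2 μ := by
  have : Fact ((2 : ℝ≥0∞) ≠ ∞) := ⟨ENNReal.ofNat_ne_top⟩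
  have : CompleteSpace M := hMcl.completeSpace_coe
  let u := denseSeq M
  refine ⟨closedSpanRange 𝕜 fun n => ⇑(u n : Lp H 2 μ),
    isMeasurableRange_closedSpanRange fun n => Lp.stronglyMeasurable (u n : Lp H 2 μ), ?_⟩
  refine eq_of_le_of_inf_le_of_sup_le (z := Mᗮ)
    (le_rangeSubspace_closedSpanRange (denseRange_denseSeq M)) ?_ ?_
  · rw [(hφ.disjoint_rangeSubspace_closedSpanRange_orthogonal hM u).eq_bot]
    exact bot_le
  · rw [Submodule.sup_orthogonal_of_hasOrthogonalProjection]
    exact le_top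

end Helson

theorem shift_invariant_iff_range_function_general {X 𝕜 H ι K : Type*} [MeasurableSpace X]
    {μ : Measure X} [SigmaFinite μ] [IsSeparable μ] [RCLike 𝕜] [NormedAddCommGroup H]
    [InnerProductSpace 𝕜 H] [CompleteSpace H] [SeparableSpace H]
    {φ : ι → X → 𝕜} (hφ : IsDetermining φ μ) (U : K → X → H →L[𝕜] H)
    (hUmeas : ∀ k v, StronglyMeasurable fun x => U k x v)
    (hUbdd : ∀ k, ∃ C, ∀ᵐ x ∂μ, ‖U k x‖ ≤ C)
    (M : Submodule 𝕜 (Lp H 2 μ)) (hMcl : IsClosed (M : Set (Lp H 2 μ))) :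
    ((∀ a ∈ M, ∀ i, ∃ b ∈ M, ⇑b =ᵐ[μ] fun x => φ i x • a x) ∧
      (∀ a ∈ M, ∀ k, ∃ b ∈ M, ⇑b =ᵐ[μ] fun x => U k x (a x))) ↔
    ∃ J : X → Submodule 𝕜 H, IsMeasurableRange J ∧ M = rangeSubspace J 2 μ ∧
      (∀ k, ∀ᵐ x ∂μ, ∀ v ∈ J x, U k x v ∈ J x) ∧
      ∀ J' : X → Submodule 𝕜 H, IsMeasurableRange J' → M = rangeSubspace J' 2 μ →
        (∀ k, ∀ᵐ x ∂μ, ∀ v ∈ J' x, U k x v ∈ J' x) → ∀ᵐ x ∂μ, J x = J' x := by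
  constructor
  · rintro ⟨hmul, hU⟩
    obtain ⟨J, hJ, rfl⟩ := hφ.exists_eq_rangeSubspace hMcl hmul
    refine ⟨J, hJ, rfl, fun k => ?_, fun J' hJ' h _ =>
      (rangeSubspace_eq_rangeSubspace_iff hJ hJ').1 h⟩
    obtain ⟨C, hC⟩ := hUbdd k
    exact (forall_exists_mem_rangeSubspace_apply_iff hJ (hUmeas k) hC).1 fun a ha => hU a ha k
  · rintro ⟨J, hJ, rfl, hU, -⟩
    refine ⟨fun a ha i => exists_mem_rangeSubspace_smul (hφ.memLp_top i) ha, fun a ha k => ?_⟩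
    obtain ⟨C, hC⟩ := hUbdd k
    exact (forall_exists_mem_rangeSubspace_apply_iff hJ (hUmeas k) hC).2 (hU k) a ha

/-- **Characterization of shift-invariant subspaces (transform side).** A closed subspace
`M ⊆ L²(𝕋^r, H)` is invariant under all modulations and the fiberwise operators `Ũ_k` iff
`M = M_J` for a measurable range function `J` (measurability expressed by a family `P` of
orthogonal projections), unique up to a.e. equality, whose fibers are `U_k(σ)`-invariant a.e. -/
theorem shift_invariant_iff_range_function (r : ℕ) (hr : 0 < r)
    {H : Type} [NormedAddCommGroup H] [InnerProductSpace ℂ H] [CompleteSpace H]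
    [TopologicalSpace.SeparableSpace H] [MeasurableSpace H] [BorelSpace H]
    {K : Type} [Countable K]
    (U : K → (Fin r → ℝ) → (H ≃ₗᵢ[ℂ] H))
    (hUmeas : ∀ (k : K) (v : H), Measurable fun σ => U k σ v)
    (M : Submodule ℂ (Lp H 2 (torusMeasure r)))
    (hMcl : IsClosed (M : Set (Lp H 2 (torusMeasure r)))) :
    ((∀ a ∈ M, ∀ m : Fin r → ℤ,
        ∃ b ∈ M, ⇑b =ᵐ[torusMeasure r] fun σ => char m σ • ⇑a σ) ∧
      (∀ a ∈ M, ∀ k : K,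
        ∃ b ∈ M, ⇑b =ᵐ[torusMeasure r] fun σ => U k σ (⇑a σ))) ↔
    (∃ J : (Fin r → ℝ) → Submodule ℂ H,
      (∀ σ, IsClosed (J σ : Set H)) ∧
      (∃ P : (Fin r → ℝ) → H →L[ℂ] H,
        (∀ σ (u : H), P σ u ∈ J σ ∧ u - P σ u ∈ (J σ)ᗮ) ∧
        ∀ u v : H, Measurable fun σ => (inner ℂ (P σ u) v : ℂ)) ∧
      (M : Set (Lp H 2 (torusMeasure r))) =
        {a : Lp H 2 (torusMeasure r) | ∀ᵐ σ ∂(torusMeasure r), ⇑a σ ∈ J σ} ∧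
      (∀ k : K, ∀ᵐ σ ∂(torusMeasure r), ∀ x ∈ J σ, U k σ x ∈ J σ) ∧
      (∀ J' : (Fin r → ℝ) → Submodule ℂ H,
        (∀ σ, IsClosed (J' σ : Set H)) →
        (∃ P' : (Fin r → ℝ) → H →L[ℂ] H,
          (∀ σ (u : H), P' σ u ∈ J' σ ∧ u - P' σ u ∈ (J' σ)ᗮ) ∧
          ∀ u v : H, Measurable fun σ => (inner ℂ (P' σ u) v : ℂ)) →
        (M : Set (Lp H 2 (torusMeasure r))) =
          {a : Lp H 2 (torusMeasure r) | ∀ᵐ σ ∂(torusMeasure r), ⇑a σ ∈ J' σ} →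
        (∀ k : K, ∀ᵐ σ ∂(torusMeasure r), ∀ x ∈ J' σ, U k σ x ∈ J' σ) →
        ∀ᵐ σ ∂(torusMeasure r), J σ = J' σ)) := by
  simpa only [IsMeasurableRange, and_assoc, and_imp, ← SetLike.coe_set_eq, coe_rangeSubspace] using!
    shift_invariant_iff_range_function_general (isDetermining_char r)
      (fun k σ => (U k σ).toLinearIsometry.toContinuousLinearMap)
      (fun k v => (hUmeas k v).stronglyMeasurable)
      (fun k => ⟨1, .of_forall fun σ => (U k σ).toLinearIsometry.norm_toContinuousLinearMap_le⟩)
      M hMcl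
end
end

section
/- For every f ∈ L²(𝕋^r, H) one has the identity (in [0,∞]): Σ_{i∈I, m∈ℤ^r} |⟨f, f_{i,m}⟩_{L²(𝕋^r,H)}|² = ∫_{𝕋^r} Σ_{i∈I} |⟨f(σ), g_i(σ)⟩_H|² dσ. -/
open MeasureTheory
open scoped ENNReal NNReal

noncomputable section

/-!
Since `⟨F, e_m g_i⟩ = ∫ e_m ⟨F(σ), g_i(σ)⟩ dσ`, the terms with fixed `i` are the squared Fourier
coefficients of the scalar function `⟨F, g_i⟩`, so the identity is Parseval's, summed over `i` by
Tonelli. The function `⟨F, g_i⟩` is only integrable, however, so Parseval's identity is needed on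
`L¹`, with values in `[0,∞]`. If the Fourier coefficients of `h ∈ L¹` are square summable, then by
Riesz–Fischer they are the coefficients of some `k ∈ L²`, and `h = k` almost everywhere; otherwise
both sides are infinite. The equality `h = k` is uniqueness on `L¹`: an integrable function
orthogonal to all characters is orthogonal to all continuous functions, whose bounded pointwise
limits include the indicators of closed sets.
-/

open Filter Topology UnitAddTorus
open scoped BoundedContinuousFunction

section AnnihilatorOfContinuous

variable {X E : Type*} [TopologicalSpace X] [HasOuterApproxClosed X] [MeasurableSpace X]
  [BorelSpace X] {μ : Measure X} [NormedAddCommGroup E] [NormedSpace ℝ E] [CompleteSpace E]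
  {f : X → E}

theorem ae_eq_zero_of_forall_integral_boundedContinuousFunction_smul_eq_zero
    (hf : Integrable f μ) (h : ∀ p : X →ᵇ ℝ≥0, ∫ x, p x • f x ∂μ = 0) : f =ᵐ[μ] 0 := by
  refine ae_eq_zero_of_forall_setIntegral_isClosed_eq_zero hf fun s hs => ?_
  have tendsto_smul (x : X) :
      Tendsto (fun n => hs.apprSeq n x • f x) atTop (𝓝 (s.indicator f x)) := by
    have := (tendsto_pi_nhds.1 (HasOuterApproxClosed.tendsto_apprSeq hs) x).smul_const (f x)
    rwa [← Set.indicator_smul_apply_left, funext fun x => one_smul ℝ≥0 (f x)] at this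
  have tendsto_integral : Tendsto (fun n => ∫ x, hs.apprSeq n x • f x ∂μ) atTop
      (𝓝 (∫ x, s.indicator f x ∂μ)) := by
    refine tendsto_integral_of_dominated_convergence (fun x => ‖f x‖) (fun n => ?_) hf.norm
      (fun n => ae_of_all _ fun x => ?_) (ae_of_all _ tendsto_smul)
    · exact (hs.apprSeq n).continuous.aestronglyMeasurable.smul hf.1
    · rw [NNReal.smul_def, norm_smul, NNReal.norm_eq]
      exact mul_le_of_le_one_left (norm_nonneg _)
        (HasOuterApproxClosed.apprSeq_apply_le_one hs n x)
  simp only [h, integral_indicator hs.measurableSet] at tendsto_integral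
  exact tendsto_nhds_unique tendsto_integral tendsto_const_nhds

theorem ae_eq_zero_of_forall_integral_smul_eq_zero_of_dense_span [CompactSpace X]
    [IsFiniteMeasure μ] {𝕜 : Type*} [RCLike 𝕜] [NormedSpace 𝕜 E] [IsScalarTower ℝ 𝕜 E]
    {S : Set C(X, 𝕜)} (hS : Dense (Submodule.span 𝕜 S : Set C(X, 𝕜)))
    (hf : Integrable f μ) (h : ∀ p ∈ S, ∫ x, p x • f x ∂μ = 0) : f =ᵐ[μ] 0 := by
  let Λ : C(X, 𝕜) →L[𝕜] E :=
    ((ContinuousLinearMap.lsmul 𝕜 𝕜).lpPairing μ ∞ 1).flip (hf.toL1 f) ∘L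
      ContinuousMap.toLp ∞ μ 𝕜
  have Λ_apply (p : C(X, 𝕜)) : Λ p = ∫ x, p x • f x ∂μ := by
    refine (ContinuousLinearMap.lpPairing_eq_integral ..).trans (integral_congr_ae ?_)
    filter_upwards [ContinuousMap.coeFn_toLp (p := ∞) (𝕜 := 𝕜) μ p, hf.coeFn_toL1] with x hp hfx
    simp only [hp, hfx, ContinuousLinearMap.coe_coe, ContinuousLinearMap.lsmul_apply]
  have Λ_eq_zero : Λ = 0 := ContinuousLinearMap.ext_on hS fun p hp => (Λ_apply p).trans (h p hp)
  refine ae_eq_zero_of_forall_integral_boundedContinuousFunction_smul_eq_zero hf fun p => ?_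
  let q : C(X, 𝕜) := ⟨fun x => ((p x : ℝ) : 𝕜), by fun_prop⟩
  calc ∫ x, p x • f x ∂μ = Λ q := by
        simp only [Λ_apply, q, ContinuousMap.coe_mk, NNReal.smul_def,
          RCLike.real_smul_eq_coe_smul (K := 𝕜)]
    _ = 0 := by rw [Λ_eq_zero, zero_apply]

end AnnihilatorOfContinuous

theorem memℓp_of_tsum_enorm_rpow_ne_top {ι : Type*} {E : ι → Type*}
    [∀ i, NormedAddCommGroup (E i)] {a : ∀ i, E i} {p : ℝ≥0∞}
    (h : ∑' i, ‖a i‖ₑ ^ p.toReal ≠ ∞) : Memℓp a p := by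
  refine memℓp_gen ?_
  simpa only [← ENNReal.toReal_rpow, toReal_enorm] using ENNReal.summable_toReal h

theorem ofReal_norm_pow {E : Type*} [SeminormedAddCommGroup E] (x : E) (n : ℕ) :
    ENNReal.ofReal (‖x‖ ^ n) = ‖x‖ₑ ^ n := by
  rw [ENNReal.ofReal_pow (norm_nonneg x), ofReal_norm]

-- Mathlib's Fourier analysis on `UnitAddTorus` is stated for these instances, which it keeps local.
attribute [local instance] instMeasureSpaceUnitAddCircle
  instIsProbabilityMeasureUnitAddCircleVolume

section FourierCoefficients

variable {d E : Type*} [Fintype d] [NormedAddCommGroup E] [NormedSpace ℂ E]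

theorem mFourierCoeff_congr_ae {f g : UnitAddTorus d → E} (h : f =ᵐ[volume] g) :
    mFourierCoeff f = mFourierCoeff g := by
  ext n
  refine integral_congr_ae ?_
  filter_upwards [h] with t ht
  rw [ht]

theorem mFourierCoeff_sub {f g : UnitAddTorus d → E} (hf : Integrable f) (hg : Integrable g) :
    mFourierCoeff (f - g) = mFourierCoeff f - mFourierCoeff g := by
  have integrable_smul (n : d → ℤ) {k : UnitAddTorus d → E} (hk : Integrable k) :
      Integrable fun t => mFourier n t • k t :=
    hk.bdd_smul ‖mFourier n‖ (mFourier n).continuous.aestronglyMeasurable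
      (ae_of_all _ (mFourier n).norm_coe_le_norm)
  ext n
  simp only [mFourierCoeff, Pi.sub_apply, smul_sub]
  exact integral_sub (integrable_smul _ hf) (integrable_smul _ hg)

theorem ae_eq_of_mFourierCoeff_eq [CompleteSpace E] {f g : UnitAddTorus d → E}
    (hf : Integrable f) (hg : Integrable g) (h : mFourierCoeff f = mFourierCoeff g) :
    f =ᵐ[volume] g := by
  refine sub_ae_eq_zero f g |>.1 <| ae_eq_zero_of_forall_integral_smul_eq_zero_of_dense_span
    (Submodule.dense_iff_topologicalClosure_eq_top.2 span_mFourier_closure_eq_top)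
    (hf.sub hg) ?_
  rintro _ ⟨n, rfl⟩
  calc ∫ t, mFourier n t • (f - g) t = mFourierCoeff (f - g) (-n) := by
        rw [mFourierCoeff, neg_neg]
    _ = 0 := by rw [mFourierCoeff_sub hf hg, h, sub_self, Pi.zero_apply]

end FourierCoefficients

section Parseval

variable {d : Type*} [Fintype d] {f : UnitAddTorus d → ℂ}

theorem tsum_enorm_sq_mFourierCoeff_of_memLp (hf : MemLp f 2) :
    ∑' n, ‖mFourierCoeff f n‖ₑ ^ 2 = ∫⁻ t, ‖f t‖ₑ ^ 2 := by
  have parseval : HasSum (fun n => ‖mFourierCoeff f n‖ ^ 2) (∫ t, ‖f t‖ ^ 2) := by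
    convert! hasSum_sq_mFourierCoeff (hf.toLp f) using 1
    · rw [mFourierCoeff_congr_ae hf.coeFn_toLp]
    · exact integral_congr_ae (hf.coeFn_toLp.symm.fun_comp (‖·‖ ^ 2))
  calc ∑' n, ‖mFourierCoeff f n‖ₑ ^ 2 = ENNReal.ofReal (∑' n, ‖mFourierCoeff f n‖ ^ 2) := by
        simp only [ENNReal.ofReal_tsum_of_nonneg (fun n => sq_nonneg ‖mFourierCoeff f n‖)
          parseval.summable, ofReal_norm_pow]
    _ = ENNReal.ofReal (∫ t, ‖f t‖ ^ 2) := by rw [parseval.tsum_eq]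
    _ = ∫⁻ t, ‖f t‖ₑ ^ 2 := by
        simp only [ofReal_integral_eq_lintegral_ofReal (hf.integrable_norm_pow two_ne_zero)
          (ae_of_all _ fun t => sq_nonneg ‖f t‖), ofReal_norm_pow]

theorem memLp_two_of_tsum_enorm_sq_mFourierCoeff_ne_top (hf : Integrable f)
    (h : ∑' n, ‖mFourierCoeff f n‖ₑ ^ 2 ≠ ∞) : MemLp f 2 := by
  have memℓp_two : Memℓp (mFourierCoeff f) 2 :=
    memℓp_of_tsum_enorm_rpow_ne_top
      (by simpa only [ENNReal.toReal_ofNat, ENNReal.rpow_ofNat] using h)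
  let g : Lp ℂ 2 (volume : Measure (UnitAddTorus d)) :=
    mFourierBasis.repr.symm ⟨mFourierCoeff f, memℓp_two⟩
  have mFourierCoeff_g : mFourierCoeff f = mFourierCoeff g := by
    ext n
    rw [← mFourierBasis_repr, LinearIsometryEquiv.apply_symm_apply]
  exact (memLp_congr_ae (ae_eq_of_mFourierCoeff_eq hf ((Lp.memLp g).integrable one_le_two)
    mFourierCoeff_g)).2 (Lp.memLp g)

theorem tsum_enorm_sq_mFourierCoeff (hf : Integrable f) :
    ∑' n, ‖mFourierCoeff f n‖ₑ ^ 2 = ∫⁻ t, ‖f t‖ₑ ^ 2 := by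
  by_cases h : MemLp f 2
  · exact tsum_enorm_sq_mFourierCoeff_of_memLp h
  · calc ∑' n, ‖mFourierCoeff f n‖ₑ ^ 2 = ∞ := by
          by_contra hsum
          exact h (memLp_two_of_tsum_enorm_sq_mFourierCoeff_ne_top hf hsum)
      _ = ∫⁻ t, ‖f t‖ₑ ^ 2 := by
          rw [MemLp, and_iff_right hf.1, eLpNorm_lt_top_iff_lintegral_rpow_enorm_lt_top two_ne_zero
            ENNReal.ofNat_ne_top, not_lt_top_iff] at h
          simpa only [ENNReal.toReal_ofNat, ENNReal.rpow_ofNat] using h.symm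

end Parseval

section FundamentalDomain

variable {d : Type*}

theorem measurableSet_forall_mem_Ioc [Countable d] (b : d → ℝ) :
    MeasurableSet {x : d → ℝ | ∀ i, x i ∈ Set.Ioc (b i) (b i + 1)} :=
  MeasurableSet.univ_pi' fun _ => measurableSet_Ioc

theorem measurableEmbedding_coe_measurableEquivPiIoc [Countable d] (b : d → ℝ) :
    MeasurableEmbedding fun t => (measurableEquivPiIoc b t : d → ℝ) :=
  (MeasurableEmbedding.subtype_coe (measurableSet_forall_mem_Ioc b)).comp
    (measurableEquivPiIoc b).measurableEmbedding

theorem measurePreserving_coe_measurableEquivPiIoc [Fintype d] (b : d → ℝ) :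
    MeasurePreserving (fun t => (measurableEquivPiIoc b t : d → ℝ)) volume
      (volume.restrict {x : d → ℝ | ∀ i, x i ∈ Set.Ioc (b i) (b i + 1)}) :=
  (measurePreserving_subtype_coe (measurableSet_forall_mem_Ioc b)).comp
    (measurePreserving_equivPiIoc b)

theorem torusMeasure_eq_restrict_Ioc (r : ℕ) :
    torusMeasure r = volume.restrict {x | ∀ i, x i ∈ Set.Ioc 0 1} := by
  have cube_ae_eq : cube r =ᵐ[volume] Set.univ.pi fun _ => Set.Ioc 0 1 :=
    Measure.univ_pi_Ico_ae_eq_Icc.trans Measure.univ_pi_Ioc_ae_eq_Icc.symm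
  simpa only [torusMeasure, Set.pi, Set.mem_univ, forall_const] using
    Measure.restrict_congr_set cube_ae_eq

theorem measurePreserving_measurableEquivPiIoc_torusMeasure (r : ℕ) :
    MeasurePreserving (fun t => (measurableEquivPiIoc (0 : Fin r → ℝ) t : Fin r → ℝ)) volume
      (torusMeasure r) := by
  have := measurePreserving_coe_measurableEquivPiIoc (0 : Fin r → ℝ)
  simpa only [torusMeasure_eq_restrict_Ioc, Pi.zero_apply, zero_add] using this

theorem char_coe_measurableEquivPiIoc {r : ℕ} (b : Fin r → ℝ) (n : Fin r → ℤ)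
    (t : UnitAddTorus (Fin r)) : char n (measurableEquivPiIoc b t) = mFourier n t := by
  obtain ⟨x, rfl⟩ := (measurableEquivPiIoc b).symm.surjective t
  rw [MeasurableEquiv.apply_symm_apply]
  simp only [coe_symm_measurableEquivPiIoc_apply, char, mFourier,
    ContinuousMap.coe_mk, fourier_coe_apply, ← Complex.exp_sum, Finset.mul_sum]
  congr! 2 with i
  push_cast
  ring

end FundamentalDomain

theorem tsum_enorm_sq_integral_char_mul {r : ℕ} {h : (Fin r → ℝ) → ℂ}
    (hh : Integrable h (torusMeasure r)) :
    ∑' m, ‖∫ σ, char m σ * h σ ∂torusMeasure r‖ₑ ^ 2 = ∫⁻ σ, ‖h σ‖ₑ ^ 2 ∂torusMeasure r := by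
  let ρ (t : UnitAddTorus (Fin r)) : Fin r → ℝ := measurableEquivPiIoc 0 t
  have hρ : MeasurableEmbedding ρ := measurableEmbedding_coe_measurableEquivPiIoc 0
  have ρ_preserving : MeasurePreserving ρ volume (torusMeasure r) :=
    measurePreserving_measurableEquivPiIoc_torusMeasure r
  have integral_char (m : Fin r → ℤ) :
      ∫ σ, char m σ * h σ ∂torusMeasure r = mFourierCoeff (h ∘ ρ) (-m) := by
    rw [← ρ_preserving.integral_comp hρ]
    simp only [mFourierCoeff, neg_neg, smul_eq_mul, Function.comp_apply, ρ,
      char_coe_measurableEquivPiIoc]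
  calc ∑' m, ‖∫ σ, char m σ * h σ ∂torusMeasure r‖ₑ ^ 2
      = ∑' m, ‖mFourierCoeff (h ∘ ρ) (-m)‖ₑ ^ 2 := by simp only [integral_char]
    _ = ∑' n, ‖mFourierCoeff (h ∘ ρ) n‖ₑ ^ 2 :=
        (Equiv.neg _).tsum_eq fun n => ‖mFourierCoeff (h ∘ ρ) n‖ₑ ^ 2
    _ = ∫⁻ t, ‖h (ρ t)‖ₑ ^ 2 :=
        tsum_enorm_sq_mFourierCoeff (ρ_preserving.integrable_comp_of_integrable hh)
    _ = ∫⁻ σ, ‖h σ‖ₑ ^ 2 ∂torusMeasure r :=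
        ρ_preserving.lintegral_comp_emb hρ fun σ => ‖h σ‖ₑ ^ 2

theorem sum_inner_sq_eq_integral_general {r : ℕ} {H I : Type*} [NormedAddCommGroup H]
    [InnerProductSpace ℂ H] [Countable I] (g : I → Lp H 2 (torusMeasure r))
    (f : I × (Fin r → ℤ) → Lp H 2 (torusMeasure r))
    (hf : ∀ (i : I) (m : Fin r → ℤ),
      ⇑(f (i, m)) =ᵐ[torusMeasure r] fun σ => char m σ • ⇑(g i) σ)
    (F : Lp H 2 (torusMeasure r)) :
    ∑' p : I × (Fin r → ℤ), ‖(inner ℂ F (f p) : ℂ)‖ₑ ^ 2 =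
      ∫⁻ σ, ∑' i : I, ‖(inner ℂ (F σ) (g i σ) : ℂ)‖ₑ ^ 2 ∂torusMeasure r := by
  have integrable_inner (i : I) := L2.integrable_inner (𝕜 := ℂ) F (g i)
  have inner_eq (i : I) (m : Fin r → ℤ) :
      inner ℂ F (f (i, m)) = ∫ σ, char m σ * inner ℂ (F σ) (g i σ) ∂torusMeasure r := by
    refine (L2.inner_def F (f (i, m))).trans (integral_congr_ae ?_)
    filter_upwards [hf i m] with σ hσ
    rw [hσ, inner_smul_right]
  calc ∑' p : I × (Fin r → ℤ), ‖(inner ℂ F (f p) : ℂ)‖ₑ ^ 2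
      = ∑' i, ∑' m, ‖(inner ℂ F (f (i, m)) : ℂ)‖ₑ ^ 2 := ENNReal.tsum_prod'
    _ = ∑' i, ∫⁻ σ, ‖(inner ℂ (F σ) (g i σ) : ℂ)‖ₑ ^ 2 ∂torusMeasure r := by
        simp only [inner_eq, tsum_enorm_sq_integral_char_mul (integrable_inner _)]
    _ = ∫⁻ σ, ∑' i, ‖(inner ℂ (F σ) (g i σ) : ℂ)‖ₑ ^ 2 ∂torusMeasure r :=
        (lintegral_tsum fun i => (integrable_inner i).1.enorm.pow_const 2).symm

/-- For every `f ∈ L²(𝕋^r, H)`: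
`Σ_{i,m} |⟨f, f_{i,m}⟩|² = ∫_{𝕋^r} Σ_i |⟨f(σ), g_i(σ)⟩|² dσ`, as an identity in `[0,∞]`,
where `f_{i,m}(σ) = e_m(σ) g_i(σ)`. -/
theorem sum_inner_sq_eq_integral (r : ℕ) (hr : 0 < r)
    {H : Type} [NormedAddCommGroup H] [InnerProductSpace ℂ H] [CompleteSpace H]
    [TopologicalSpace.SeparableSpace H]
    {I : Type} [Countable I]
    (g : I → Lp H 2 (torusMeasure r))
    (f : I × (Fin r → ℤ) → Lp H 2 (torusMeasure r))
    (hf : ∀ (i : I) (m : Fin r → ℤ),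
      ⇑(f (i, m)) =ᵐ[torusMeasure r] fun σ => char m σ • ⇑(g i) σ)
    (F : Lp H 2 (torusMeasure r)) :
    ∑' p : I × (Fin r → ℤ), (‖(inner ℂ F (f p) : ℂ)‖₊ : ℝ≥0∞) ^ 2 =
      ∫⁻ σ, (∑' i : I, (‖(inner ℂ (⇑F σ) (⇑(g i) σ) : ℂ)‖₊ : ℝ≥0∞) ^ 2) ∂(torusMeasure r) :=
  sum_inner_sq_eq_integral_general g f hf F
end
end

section
/- Let 0 < B < ∞. The family {f_{i,m} : i ∈ I, m ∈ ℤ^r} is a Bessel family for S with constant B if and only if for a.e. σ ∈ 𝕋^r the family {g_i(σ) : i ∈ I} is a Bessel family for J(σ) with the same constant B. -/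
open MeasureTheory
open scoped ENNReal NNReal

noncomputable section

/-!
Since the characters form an orthonormal basis of `L²(𝕋^r)`, Parseval's identity for the functions
`σ ↦ ⟪g_i(σ), h(σ)⟫`, when these are square integrable, gives
`∑_{i,m} |⟪h, f_{i,m}⟫|² = ∫ ∑_i |⟪h(σ), g_i(σ)⟫|² dσ`.
The closed spans may be replaced by the whole spaces, since finitely many of the inner products with
a vector only depend on its projection to a finite-dimensional space. The Bessel bound in a.e. fiber
makes the functions above square integrable and integrates to the bound for `f`. Conversely, testing
the bound for `f` on the functions `1_s x` with `s` measurable gives, for each fixed `x`, the fiber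
bound at `x` for a.e. `σ`. A.e. all `g_i(σ)` lie in one separable subspace, so countably many `x`
suffice, because the set of vectors satisfying a Bessel inequality is closed.
-/

section BesselFamilies

variable {𝕜 E ι : Type*} [RCLike 𝕜] [NormedAddCommGroup E] [InnerProductSpace 𝕜 E]
  {v : ι → E} {s t : Set E} {C : ℝ≥0}

variable (𝕜) in
/-- `v` is a Bessel family with constant `C` for the vectors of `s`. The test vectors range over an
arbitrary set rather than a closed subspace, so that the inequality can be transferred from a dense
set of vectors to its closure. The sum is taken in `ℝ≥0∞`, where it always exists. -/
def IsBesselOn (v : ι → E) (s : Set E) (C : ℝ≥0) : Prop :=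
  ∀ x ∈ s, ∑' i, ‖inner 𝕜 x (v i)‖ₑ ^ 2 ≤ C * ‖x‖ₑ ^ 2

namespace IsBesselOn

lemma mono (hv : IsBesselOn 𝕜 v t C) (hst : s ⊆ t) : IsBesselOn 𝕜 v s C :=
  fun x hx => hv x (hst hx)

protected lemma closure (hv : IsBesselOn 𝕜 v s C) : IsBesselOn 𝕜 v (closure s) C := by
  have hclosed : IsClosed {x : E | ∑' i, ‖inner 𝕜 x (v i)‖ₑ ^ 2 ≤ C * ‖x‖ₑ ^ 2} := by
    simp only [ENNReal.tsum_eq_iSup_sum, iSup_le_iff, Set.ofPred_forall]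
    refine isClosed_iInter fun t => isClosed_le ?_ ?_
    · exact continuous_finsetSum _ fun i _ => by fun_prop
    · exact (ENNReal.continuous_const_mul ENNReal.coe_ne_top).comp (by fun_prop)
  exact hclosed.closure_subset_iff.2 hv

-- Each finite partial sum at `x` only sees the projection of `x` to a finite-dimensional subspace.
lemma univ_of_span (hv : IsBesselOn 𝕜 v (Submodule.span 𝕜 (Set.range v)) C) :
    IsBesselOn 𝕜 v Set.univ C := by
  classical
  intro x _
  rw [ENNReal.tsum_eq_iSup_sum]
  refine iSup_le fun t => ?_
  let K : Submodule 𝕜 E := Submodule.span 𝕜 (t.image v)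
  have hvK : ∀ i ∈ t, v i ∈ K := fun i hi =>
    Submodule.subset_span (Finset.mem_image_of_mem v hi)
  have hKspan : K ≤ Submodule.span 𝕜 (Set.range v) := Submodule.span_mono (by simp)
  calc ∑ i ∈ t, ‖inner 𝕜 x (v i)‖ₑ ^ 2
      = ∑ i ∈ t, ‖inner 𝕜 (K.starProjection x) (v i)‖ₑ ^ 2 :=
        Finset.sum_congr rfl fun i hi => by
          rw [K.inner_starProjection_left_eq_right, K.starProjection_eq_self_iff.2 (hvK i hi)]
    _ ≤ ∑' i, ‖inner 𝕜 (K.starProjection x) (v i)‖ₑ ^ 2 := ENNReal.sum_le_tsum t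
    _ ≤ C * ‖K.starProjection x‖ₑ ^ 2 := hv _ (hKspan (K.starProjection_apply_mem x))
    _ ≤ C * ‖x‖ₑ ^ 2 := by
        gcongr
        exact enorm_le_iff_norm_le.2 (K.norm_starProjection_apply_le x)

lemma norm_inner_le (hv : IsBesselOn 𝕜 v s C) {x : E} (hx : x ∈ s) (i : ι) :
    ‖inner 𝕜 x (v i)‖ ≤ NNReal.sqrt C * ‖x‖ := by
  have hsq : ‖inner 𝕜 x (v i)‖ₑ ^ 2 ≤ C * ‖x‖ₑ ^ 2 :=
    (ENNReal.le_tsum (f := fun i => ‖inner 𝕜 x (v i)‖ₑ ^ 2) i).trans (hv x hx)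
  have hsq' : ‖inner 𝕜 x (v i)‖₊ ^ 2 ≤ (NNReal.sqrt C * ‖x‖₊) ^ 2 := by
    rw [mul_pow, NNReal.sq_sqrt, ← ENNReal.coe_le_coe]
    push_cast
    exact hsq
  have hle : ‖inner 𝕜 x (v i)‖₊ ≤ NNReal.sqrt C * ‖x‖₊ :=
    (pow_le_pow_iff_left₀ zero_le zero_le two_ne_zero).1 hsq'
  exact NNReal.coe_le_coe.2 hle

end IsBesselOn

lemma isBesselOn_closure_span_iff :
    IsBesselOn 𝕜 v (Submodule.span 𝕜 (Set.range v)).topologicalClosure C ↔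
      IsBesselOn 𝕜 v Set.univ C :=
  ⟨fun hv => (hv.mono (Submodule.le_topologicalClosure _)).univ_of_span,
    fun hv => hv.mono (Set.subset_univ _)⟩

lemma tsum_enorm_sq_inner_hilbertBasis (b : HilbertBasis ι 𝕜 E) (x : E) :
    ∑' i, ‖inner 𝕜 x (b i)‖ₑ ^ 2 = ‖x‖ₑ ^ 2 := by
  have hsum : HasSum (fun i => ‖inner 𝕜 x (b i)‖ ^ 2) (‖x‖ ^ 2) := by
    simpa [b.repr_apply_apply, norm_inner_symm] using lp.hasSum_norm (by norm_num) (b.repr x)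
  rw [← ofReal_norm, ← ENNReal.ofReal_pow (norm_nonneg x), ← hsum.tsum_eq,
    ENNReal.ofReal_tsum_of_nonneg (fun _ => by positivity) hsum.summable]
  simp_rw [ENNReal.ofReal_pow (norm_nonneg _), ofReal_norm]

end BesselFamilies

section Fibers

variable {X : Type*} [MeasurableSpace X] {μ : Measure X}

lemma enorm_sq_eq_lintegral_enorm_sq {E : Type*} [NormedAddCommGroup E] (h : Lp E 2 μ) :
    ‖h‖ₑ ^ 2 = ∫⁻ σ, ‖h σ‖ₑ ^ 2 ∂μ := by
  rw [Lp.enorm_def]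
  simpa using eLpNorm_nnreal_pow_eq_lintegral (p := 2) (f := h) (μ := μ) two_ne_zero

lemma lintegral_comp_indicatorConstLp {E : Type*} [NormedAddCommGroup E] {p : ℝ≥0∞} {s : Set X}
    (hs : MeasurableSet s) (hμs : μ s ≠ ∞) (x : E) {Φ : X → E → ℝ≥0∞} (hΦ : ∀ σ, Φ σ 0 = 0) :
    ∫⁻ σ, Φ σ (indicatorConstLp p hs hμs x σ) ∂μ = ∫⁻ σ in s, Φ σ x ∂μ := by
  classical
  rw [← lintegral_indicator hs]
  refine lintegral_congr_ae ?_
  filter_upwards [indicatorConstLp_coeFn (p := p) (hs := hs) (hμs := hμs) (c := x)] with σ hσ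
  rw [hσ, Set.indicator_apply, Set.indicator_apply, apply_ite (Φ σ), hΦ]

variable {𝕜 H ι M : Type*} [RCLike 𝕜] [NormedAddCommGroup H] [InnerProductSpace 𝕜 H]

lemma memLp_inner_indicatorConstLp {p q : ℝ≥0∞} {g : X → H} (hg : MemLp g q μ) {s : Set X}
    (hs : MeasurableSet s) (hμs : μ s ≠ ∞) (x : H) :
    MemLp (fun σ => inner 𝕜 (g σ) (indicatorConstLp p hs hμs x σ)) q μ := by
  have hgx : MemLp (fun σ => inner 𝕜 (g σ) x) q μ := hg.inner_const x
  refine (hgx.indicator hs).ae_eq ?_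
  filter_upwards [indicatorConstLp_coeFn (p := p) (hs := hs) (hμs := hμs) (c := x)] with σ hσ
  by_cases hσs : σ ∈ s <;> simp [hσ, hσs]

lemma inner_eq_inner_toLp_of_ae_eq_smul {e : Lp 𝕜 2 μ} {f g h : Lp H 2 μ}
    (hf : f =ᵐ[μ] fun σ => e σ • g σ) (hφ : MemLp (fun σ => inner 𝕜 (g σ) (h σ)) 2 μ) :
    inner 𝕜 h f = inner 𝕜 (hφ.toLp _) e := by
  rw [L2.inner_def, L2.inner_def]
  refine integral_congr_ae ?_
  filter_upwards [hf, hφ.coeFn_toLp] with σ hfσ hφσ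
  rw [hfσ, hφσ, inner_smul_right, RCLike.inner_apply, inner_conj_symm]

lemma tsum_enorm_sq_inner_eq_lintegral (b : HilbertBasis M 𝕜 (Lp 𝕜 2 μ)) {g h : Lp H 2 μ}
    {f : M → Lp H 2 μ} (hf : ∀ m, f m =ᵐ[μ] fun σ => b m σ • g σ)
    (hφ : MemLp (fun σ => inner 𝕜 (g σ) (h σ)) 2 μ) :
    ∑' m, ‖inner 𝕜 h (f m)‖ₑ ^ 2 = ∫⁻ σ, ‖inner 𝕜 (h σ) (g σ)‖ₑ ^ 2 ∂μ := by
  simp_rw [inner_eq_inner_toLp_of_ae_eq_smul (hf _) hφ]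
  rw [tsum_enorm_sq_inner_hilbertBasis, enorm_sq_eq_lintegral_enorm_sq]
  refine lintegral_congr_ae ?_
  filter_upwards [hφ.coeFn_toLp] with σ hσ
  rw [hσ, ← ofReal_norm, norm_inner_symm, ofReal_norm]

variable [Countable ι] {C : ℝ≥0}

lemma ae_isBesselOn_univ_of_forall_ae {g : ι → X → H} (hg : ∀ i, AEStronglyMeasurable (g i) μ)
    (h : ∀ x : H, ∀ᵐ σ ∂μ, IsBesselOn 𝕜 (g · σ) {x} C) :
    ∀ᵐ σ ∂μ, IsBesselOn 𝕜 (g · σ) Set.univ C := by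
  choose t ht hgt using fun i => (hg i).isSeparable_ae_range
  obtain ⟨D, hD, htD⟩ := (TopologicalSpace.IsSeparable.iUnion ht).span (R := 𝕜)
  filter_upwards [ae_all_iff.2 hgt, (ae_ball_iff hD).2 fun x _ => h x] with σ hσt hσD
  have hBesselD : IsBesselOn 𝕜 (g · σ) D C := fun x hx => hσD x hx x rfl
  have hspan : Submodule.span 𝕜 (Set.range (g · σ)) ≤ Submodule.span 𝕜 (⋃ i, t i) :=
    Submodule.span_mono (Set.range_subset_iff.2 fun i => Set.mem_iUnion_of_mem i (hσt i))
  exact (hBesselD.closure.mono (Set.Subset.trans hspan htD)).univ_of_span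

variable (b : HilbertBasis M 𝕜 (Lp 𝕜 2 μ)) {g : ι → Lp H 2 μ} {f : ι × M → Lp H 2 μ}
  (hf : ∀ i m, f (i, m) =ᵐ[μ] fun σ => b m σ • g i σ)
include hf

lemma tsum_prod_enorm_sq_inner_eq_lintegral {h : Lp H 2 μ}
    (hφ : ∀ i, MemLp (fun σ => inner 𝕜 (g i σ) (h σ)) 2 μ) :
    ∑' p, ‖inner 𝕜 h (f p)‖ₑ ^ 2 = ∫⁻ σ, ∑' i, ‖inner 𝕜 (h σ) (g i σ)‖ₑ ^ 2 ∂μ := by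
  rw [ENNReal.tsum_prod (f := fun i m => ‖inner 𝕜 h (f (i, m))‖ₑ ^ 2), lintegral_tsum fun i =>
    ((Lp.aestronglyMeasurable h).inner (Lp.aestronglyMeasurable (g i))).enorm.pow_const 2]
  exact tsum_congr fun i => tsum_enorm_sq_inner_eq_lintegral b (hf i) (hφ i)

lemma isBesselOn_univ_of_ae (hg : ∀ᵐ σ ∂μ, IsBesselOn 𝕜 (g · σ) Set.univ C) :
    IsBesselOn 𝕜 f Set.univ C := by
  intro h _
  have hφ : ∀ i, MemLp (fun σ => inner 𝕜 (g i σ) (h σ)) 2 μ := by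
    refine fun i => (Lp.memLp h).of_le_mul (c := NNReal.sqrt C)
      ((Lp.aestronglyMeasurable (g i)).inner (Lp.aestronglyMeasurable h)) ?_
    filter_upwards [hg] with σ hσ
    rw [norm_inner_symm]
    exact hσ.norm_inner_le (Set.mem_univ _) i
  rw [tsum_prod_enorm_sq_inner_eq_lintegral b hf hφ, enorm_sq_eq_lintegral_enorm_sq,
    ← lintegral_const_mul' _ _ ENNReal.coe_ne_top]
  refine lintegral_mono_ae ?_
  filter_upwards [hg] with σ hσ
  exact hσ (h σ) (Set.mem_univ _)

lemma ae_isBesselOn_singleton [SigmaFinite μ] (hS : IsBesselOn 𝕜 f Set.univ C) (x : H) :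
    ∀ᵐ σ ∂μ, IsBesselOn 𝕜 (g · σ) {x} C := by
  have hx : ∀ i, MemLp (fun σ => inner 𝕜 x (g i σ)) 2 μ :=
    fun i => (Lp.memLp (g i)).const_inner x
  simp only [IsBesselOn, Set.mem_singleton_iff, forall_eq]
  refine ae_le_of_forall_setLIntegral_le_of_sigmaFinite₀
    (AEMeasurable.tsum fun i => (hx i).1.enorm.pow_const 2) fun s hs hμs => ?_
  let h : Lp H 2 μ := indicatorConstLp 2 hs hμs.ne x
  have hφ : ∀ i, MemLp (fun σ => inner 𝕜 (g i σ) (h σ)) 2 μ :=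
    fun i => memLp_inner_indicatorConstLp (Lp.memLp (g i)) hs hμs.ne x
  calc ∫⁻ σ in s, ∑' i, ‖inner 𝕜 x (g i σ)‖ₑ ^ 2 ∂μ
      = ∫⁻ σ, ∑' i, ‖inner 𝕜 (h σ) (g i σ)‖ₑ ^ 2 ∂μ :=
        (lintegral_comp_indicatorConstLp hs hμs.ne x
          (Φ := fun σ y => ∑' i, ‖inner 𝕜 y (g i σ)‖ₑ ^ 2) (by simp)).symm
    _ = ∑' p, ‖inner 𝕜 h (f p)‖ₑ ^ 2 := (tsum_prod_enorm_sq_inner_eq_lintegral b hf hφ).symm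
    _ ≤ C * ‖h‖ₑ ^ 2 := hS h (Set.mem_univ h)
    _ = ∫⁻ σ in s, C * ‖x‖ₑ ^ 2 ∂μ := by
        rw [enorm_sq_eq_lintegral_enorm_sq, lintegral_const_mul' _ _ ENNReal.coe_ne_top,
          lintegral_comp_indicatorConstLp hs hμs.ne x (Φ := fun _ y => ‖y‖ₑ ^ 2) (by simp)]

theorem bessel_characterization_general [SigmaFinite μ] :
    IsBesselOn 𝕜 f (Submodule.span 𝕜 (Set.range f)).topologicalClosure C ↔
      ∀ᵐ σ ∂μ, IsBesselOn 𝕜 (g · σ)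
        (Submodule.span 𝕜 (Set.range (g · σ))).topologicalClosure C := by
  simp_rw [isBesselOn_closure_span_iff]
  exact ⟨fun hS => ae_isBesselOn_univ_of_forall_ae (fun i => Lp.aestronglyMeasurable (g i))
    (ae_isBesselOn_singleton b hf hS), isBesselOn_univ_of_ae b hf⟩

end Fibers

section Torus

-- `UnitAddTorus.mFourierBasis` lives over this measure, not over `AddCircle.measureSpace`.
local instance : MeasureSpace UnitAddCircle := ⟨AddCircle.haarAddCircle⟩

variable (r : ℕ)

/-- The quotient map `ℝ^r → ℝ^r/ℤ^r`. -/
def torusMk (σ : Fin r → ℝ) : UnitAddTorus (Fin r) := fun j => σ j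

/-- The section of the quotient map `ℝ^r → ℝ^r/ℤ^r` with values in `(0,1]^r`, the box for which
Mathlib provides the measure-preserving equivalence; it agrees with `[0,1)^r` up to a null set. -/
def torusSection (t : UnitAddTorus (Fin r)) : Fin r → ℝ :=
  UnitAddTorus.measurableEquivPiIoc 0 t

lemma torusMk_comp_torusSection : torusMk r ∘ torusSection r = id :=
  funext (UnitAddTorus.measurableEquivPiIoc (0 : Fin r → ℝ)).symm_apply_apply

lemma torusMeasure_eq_restrict_pi_Ioc :
    torusMeasure r = volume.restrict (Set.univ.pi fun _ => Set.Ioc 0 1) :=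
  Measure.restrict_congr_set <|
    Measure.univ_pi_Ico_ae_eq_Icc.trans Measure.univ_pi_Ioc_ae_eq_Icc.symm

instance : IsFiniteMeasure (torusMeasure r) := by
  rw [torusMeasure_eq_restrict_pi_Ioc]
  exact isFiniteMeasure_restrict.2 (by simp [volume_pi_pi])

lemma measurePreserving_torusSection :
    MeasurePreserving (torusSection r) volume (torusMeasure r) := by
  have hbox : {σ : Fin r → ℝ | ∀ j, σ j ∈ Set.Ioc ((0 : Fin r → ℝ) j) ((0 : Fin r → ℝ) j + 1)} =
      Set.univ.pi fun _ => Set.Ioc 0 1 := by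
    ext σ
    simp
  rw [torusMeasure_eq_restrict_pi_Ioc, ← hbox]
  exact (measurePreserving_subtype_coe (MeasurableSet.univ_pi' fun _ => measurableSet_Ioc)).comp
    (UnitAddTorus.measurePreserving_equivPiIoc 0)

lemma measurable_torusMk : Measurable (torusMk r) :=
  measurable_pi_lambda _ fun j => AddCircle.measurable_mk'.comp (measurable_pi_apply j)

lemma measurePreserving_torusMk : MeasurePreserving (torusMk r) (torusMeasure r) volume := by
  refine ⟨measurable_torusMk r, ?_⟩
  have hsection := measurePreserving_torusSection r
  rw [← hsection.map_eq, Measure.map_map (measurable_torusMk r) hsection.measurable,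
    torusMk_comp_torusSection, Measure.map_id]

lemma mFourier_torusMk {r : ℕ} (m : Fin r → ℤ) (σ : Fin r → ℝ) :
    UnitAddTorus.mFourier m (torusMk r σ) = char m σ := by
  simp only [UnitAddTorus.mFourier, char, torusMk, ContinuousMap.coe_mk, fourier_coe_apply,
    ← Complex.exp_sum, Finset.mul_sum]
  congr! 2
  push_cast
  ring

lemma compMeasurePreserving_torusSection_torusMk
    (φ : Lp ℂ 2 (volume : Measure (UnitAddTorus (Fin r)))) :
    Lp.compMeasurePreservingₗᵢ ℂ _ (measurePreserving_torusSection r)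
      (Lp.compMeasurePreservingₗᵢ ℂ _ (measurePreserving_torusMk r) φ) = φ := by
  refine (Lp.compMeasurePreserving_comp_apply φ (measurePreserving_torusMk r)
    (measurePreserving_torusSection r)).symm.trans ?_
  simp only [torusMk_comp_torusSection, Lp.compMeasurePreserving_id_apply]

/-- The isometry `L²([0,1)^r) ≃ L²(ℝ^r/ℤ^r)` given by composition with the section
`torusSection`. -/
def torusL2Equiv :
    Lp ℂ 2 (torusMeasure r) ≃ₗᵢ[ℂ] Lp ℂ 2 (volume : Measure (UnitAddTorus (Fin r))) :=
  .ofSurjective (Lp.compMeasurePreservingₗᵢ ℂ _ (measurePreserving_torusSection r))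
    fun φ => ⟨_, compMeasurePreserving_torusSection_torusMk r φ⟩

/-- The orthonormal basis of `L²([0,1)^r)` consisting of the characters `e_m`, transported from
`UnitAddTorus.mFourierBasis`. -/
def charBasis : HilbertBasis (Fin r → ℤ) ℂ (Lp ℂ 2 (torusMeasure r)) :=
  .ofRepr ((torusL2Equiv r).trans UnitAddTorus.mFourierBasis.repr)

lemma coeFn_charBasis {r : ℕ} (m : Fin r → ℤ) : charBasis r m =ᵐ[torusMeasure r] char m := by
  have hbasis : charBasis r m = Lp.compMeasurePreservingₗᵢ ℂ _ (measurePreserving_torusMk r)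
      (UnitAddTorus.mFourierBasis m) :=
    (torusL2Equiv r).symm_apply_eq.2 (compMeasurePreserving_torusSection_torusMk r _).symm
  rw [hbasis, UnitAddTorus.coe_mFourierBasis]
  filter_upwards [Lp.coeFn_compMeasurePreserving (UnitAddTorus.mFourierLp 2 m)
      (measurePreserving_torusMk r),
    (measurePreserving_torusMk r).quasiMeasurePreserving.ae
      (UnitAddTorus.coeFn_mFourierLp 2 m)] with σ hσ hmk
  exact hσ.trans (hmk.trans (mFourier_torusMk m σ))

end Torus

/-- **Characterization of Bessel families (transform side).** The family `{f_{i,m}}`,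
`f_{i,m}(σ) = e_m(σ) g_i(σ)`, is a Bessel family with constant `B` for
`S = closed span {f_{i,m}}` iff for a.e. `σ` the family `{g_i(σ)}` is a Bessel family with the
same constant `B` for `J(σ) = closed span {g_i(σ)}`. -/
theorem bessel_characterization (r : ℕ) (hr : 0 < r)
    {H : Type} [NormedAddCommGroup H] [InnerProductSpace ℂ H] [CompleteSpace H]
    [TopologicalSpace.SeparableSpace H]
    {I : Type} [Countable I]
    (g : I → Lp H 2 (torusMeasure r))
    (f : I × (Fin r → ℤ) → Lp H 2 (torusMeasure r))
    (hf : ∀ (i : I) (m : Fin r → ℤ),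
      ⇑(f (i, m)) =ᵐ[torusMeasure r] fun σ => char m σ • ⇑(g i) σ)
    (B : ℝ) (hB : 0 < B) :
    (∀ h : Lp H 2 (torusMeasure r),
      h ∈ (Submodule.span ℂ (Set.range f)).topologicalClosure →
      ∑' p : I × (Fin r → ℤ), (‖(inner ℂ h (f p) : ℂ)‖₊ : ℝ≥0∞) ^ 2 ≤
        ENNReal.ofReal B * (‖h‖₊ : ℝ≥0∞) ^ 2) ↔
    (∀ᵐ σ ∂(torusMeasure r), ∀ x : H,
      x ∈ (Submodule.span ℂ (Set.range fun i => ⇑(g i) σ)).topologicalClosure →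
      ∑' i : I, (‖(inner ℂ x (⇑(g i) σ) : ℂ)‖₊ : ℝ≥0∞) ^ 2 ≤
        ENNReal.ofReal B * (‖x‖₊ : ℝ≥0∞) ^ 2) :=
  bessel_characterization_general (charBasis r) (C := B.toNNReal) fun i m =>
    (hf i m).trans <| by filter_upwards [coeFn_charBasis m] with σ hσ; rw [hσ]
end
end
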